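/- arXiv:2104.05907 — 2 statements merged into one kernel-verified Lean document; each statement's English description precedes it below -/
import Mathlib

section
/- Let (G₁,T₁) and (G₂,T₂) be clean grafts, and let X ⊆ T₁ be a set of vertices with |X| = |T₂| such that all vertices of X have the same neighbourhood in G₁. Then join((G₁,T₁),X,(G₂,T₂)) is a clean graft. -/
universe u

/-- A *wheel* is a graph consisting of an induced cycle of length at least 4 together with a
single additional vertex (the hub) having at least 3 neighbours on the cycle. -/
def IsWheel {V : Type u} (G : SimpleGraph V) : Prop :=
  ∃ (w : V) (n : ℕ), 4 ≤ n ∧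
    Nonempty (G.induce {u | u ≠ w} ≃g SimpleGraph.cycleGraph n) ∧
    3 ≤ (G.neighborSet w).ncard

/-- A graph is a *fan with pivot `f`* if deleting `f` leaves an induced path and `f` has at
least 3 neighbours (necessarily on that path). -/
def IsFanWithPivot {V : Type u} (G : SimpleGraph V) (f : V) : Prop :=
  (∃ n : ℕ, Nonempty (G.induce {u | u ≠ f} ≃g SimpleGraph.pathGraph n)) ∧
    3 ≤ (G.neighborSet f).ncard

/-- A *fan* is a graph consisting of an induced path and a single additional vertex (the pivot)
with at least 3 neighbours on the path. -/
def IsFan {V : Type u} (G : SimpleGraph V) : Prop :=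
  ∃ f : V, IsFanWithPivot G f

/-- A *guarded fan* is a graft `(F, M)` such that `F` is a fan with pivot `f` and both
endpoints of the path `F \ {f}` lie in `M`. -/
def IsGuardedFan {V : Type u} (G : SimpleGraph V) (M : Set V) : Prop :=
  ∃ (f : V) (n : ℕ) (e : G.induce {u | u ≠ f} ≃g SimpleGraph.pathGraph (n + 1)),
    3 ≤ (G.neighborSet f).ncard ∧
    ((e.symm 0 : {u // u ≠ f}) : V) ∈ M ∧ ((e.symm (Fin.last n) : {u // u ≠ f}) : V) ∈ M

/-- A *mountable path* is a graft `(P, M)` such that `P` is a path and `|M| ≥ 3`. -/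
def IsMountablePath {V : Type u} (G : SimpleGraph V) (M : Set V) : Prop :=
  (∃ n : ℕ, Nonempty (G ≃g SimpleGraph.pathGraph n)) ∧ 3 ≤ M.ncard

/-- A *theta* is a graph consisting of three internally vertex-disjoint paths of length at
least 2 with common endpoints, such that every edge lies on one of the three paths. -/
def IsTheta {V : Type u} (G : SimpleGraph V) : Prop :=
  ∃ (a b : V) (p₁ p₂ p₃ : G.Walk a b),
    a ≠ b ∧ p₁.IsPath ∧ p₂.IsPath ∧ p₃.IsPath ∧
    2 ≤ p₁.length ∧ 2 ≤ p₂.length ∧ 2 ≤ p₃.length ∧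
    (∀ v, v ∈ p₁.support → v ∈ p₂.support → v = a ∨ v = b) ∧
    (∀ v, v ∈ p₁.support → v ∈ p₃.support → v = a ∨ v = b) ∧
    (∀ v, v ∈ p₂.support → v ∈ p₃.support → v = a ∨ v = b) ∧
    (∀ v : V, v ∈ p₁.support ∨ v ∈ p₂.support ∨ v ∈ p₃.support) ∧
    (∀ e ∈ G.edgeSet, e ∈ p₁.edges ∨ e ∈ p₂.edges ∨ e ∈ p₃.edges)

/-- A graft `(G, T)` is *clean* if (1) `G` is triangle-free, (2) `T` is a stable set,
(3) `G` contains no induced wheel, (4) `(G,T)` contains no induced guarded fan, and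
(5) `(G,T)` contains no induced mountable path. -/
def IsCleanGraft {V : Type u} (G : SimpleGraph V) (T : Set V) : Prop :=
  G.CliqueFree 3 ∧
  (∀ u ∈ T, ∀ v ∈ T, ¬ G.Adj u v) ∧
  (∀ s : Set V, ¬ IsWheel (G.induce s)) ∧
  (∀ s : Set V, ¬ IsGuardedFan (G.induce s) (Subtype.val ⁻¹' T)) ∧
  (∀ s : Set V, ¬ IsMountablePath (G.induce s) (Subtype.val ⁻¹' T))

/-- The graph of `pendent((G,T),t)`: a new vertex (`none`) is added whose only
neighbour is `t`. -/
def pendentGraph {V : Type u} (G : SimpleGraph V) (t : V) : SimpleGraph (Option V) :=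
  SimpleGraph.fromRel (fun a b =>
    (∃ u v : V, a = some u ∧ b = some v ∧ G.Adj u v) ∨ (a = none ∧ b = some t))

/-- The distinguished set of `pendent((G,T),t)`: `T' = (T ∪ {t'}) \ {t}`. -/
def pendentT {V : Type u} (T : Set V) (t : V) : Set (Option V) :=
  insert none (some '' (T \ {t}))

/-- The graph of `clone((G,T),t)`: a new vertex (`none`) is added whose neighbourhood is
exactly the neighbourhood of `t` in `G`. -/
def cloneGraph {V : Type u} (G : SimpleGraph V) (t : V) : SimpleGraph (Option V) :=
  SimpleGraph.fromRel (fun a b =>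
    (∃ u v : V, a = some u ∧ b = some v ∧ G.Adj u v) ∨
    (∃ v : V, a = none ∧ b = some v ∧ G.Adj t v))

/-- The distinguished set of `clone((G,T),t)`: `T' = T ∪ {t'}`. -/
def cloneT {V : Type u} (T : Set V) : Set (Option V) :=
  insert none (some '' T)

/-- The graph of `join((G₁,T₁), X, (G₂,T₂))`, where the bijection `φ : X ≃ T₂` prescribes
which vertex of `T₂` is identified with which vertex of `X`. -/
def joinGraph {V₁ V₂ : Type u} (G₁ : SimpleGraph V₁) (G₂ : SimpleGraph V₂)
    (X : Set V₁) (T₂ : Set V₂) (φ : X ≃ T₂) :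
    SimpleGraph (V₁ ⊕ {v : V₂ // v ∉ T₂}) :=
  SimpleGraph.fromRel (fun a b =>
    (∃ u v : V₁, a = Sum.inl u ∧ b = Sum.inl v ∧ G₁.Adj u v) ∨
    (∃ u v : {v : V₂ // v ∉ T₂}, a = Sum.inr u ∧ b = Sum.inr v ∧ G₂.Adj ↑u ↑v) ∨
    (∃ (x : X) (w : {v : V₂ // v ∉ T₂}), a = Sum.inl ↑x ∧ b = Sum.inr w ∧ G₂.Adj ↑(φ x) ↑w) ∨
    (∃ x y : X, a = Sum.inl ↑x ∧ b = Sum.inl ↑y ∧ G₂.Adj ↑(φ x) ↑(φ y)))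

/-- The distinguished set of `join((G₁,T₁), X, (G₂,T₂))` is `T₁`. -/
def joinT {V₁ V₂ : Type u} (T₁ : Set V₁) (T₂ : Set V₂) : Set (V₁ ⊕ {v : V₂ // v ∉ T₂}) :=
  Sum.inl '' T₁

/-- A *graph–stable-set pair*: a graph together with a set of (stable) sets of vertices. -/
structure GSPair : Type 1 where
  V : Type
  G : SimpleGraph V
  S : Set (Set V)

/-- The `NEXT` procedure of the Burling construction.  The new vertex type consists of the
original vertices, the vertices `(S, u)` of the copy `H_S` for each `S ∈ 𝒮`, and the new
vertices `v_{S,T}` for `S ∈ 𝒮` and `T ∈ 𝒮(H_S)`. -/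
def NEXT (P : GSPair) : GSPair where
  V := P.V ⊕ ((↥P.S × P.V) ⊕ (↥P.S × ↥P.S))
  G := SimpleGraph.fromRel (fun a b =>
    (∃ u v : P.V, a = Sum.inl u ∧ b = Sum.inl v ∧ P.G.Adj u v) ∨
    (∃ (S : ↥P.S) (u v : P.V),
      a = Sum.inr (Sum.inl (S, u)) ∧ b = Sum.inr (Sum.inl (S, v)) ∧ P.G.Adj u v) ∨
    (∃ (S T : ↥P.S) (u : P.V),
      a = Sum.inr (Sum.inr (S, T)) ∧ b = Sum.inr (Sum.inl (S, u)) ∧ u ∈ (T : Set P.V)))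
  S := { A | ∃ S T : ↥P.S,
      A = Sum.inl '' (S : Set P.V) ∪ (fun u => Sum.inr (Sum.inl (S, u))) '' (T : Set P.V) ∨
      A = insert (Sum.inr (Sum.inr (S, T))) (Sum.inl '' (S : Set P.V)) }

/-- `BurlingPair k` is the graph–stable-set pair `(G'_{k+1}, 𝒮_{k+1})`; in particular
`BurlingPair 0 = (K₁, {V(K₁)})` and `(BurlingPair (k-1)).G` is the `k`-th Burling graph. -/
def BurlingPair : ℕ → GSPair
  | 0 => ⟨Unit, ⊥, {Set.univ}⟩
  | (k + 1) => NEXT (BurlingPair k)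

/-- A *graft*: a graph together with a distinguished set of vertices. -/
structure GraftData : Type 1 where
  V : Type
  G : SimpleGraph V
  T : Set V

/-- The step `(G_k, T_k) ↦ (G_{k+1}, T_{k+1})` of the graft construction of Burling graphs,
with all the pendent, clone and join operations of the construction performed at once.

Vertices: `inl x` for `x ∈ V(G_k)`; `inr (inl ⟨u, w⟩)` for `u ∈ T_k` and
`w : ↥T_k ⊕ ↥T_k` with `w ≠ inl u`, the `2|T_k| - 1` clones of `u` (so that
`X_u = {u} ∪ {⟨u, w⟩}` has been identified with `S'_u ≃ T_k ⊕ T_k`, the vertex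
indexed by `inl v` being the copy of `v` in `S_u` and the vertex indexed by `inr v`
being the pendant `t_{u,v}`); and `inr (inr (u, y))` for the vertices of the copy
`H'_u` not in `S'_u`, namely `y = inl x` for a copy of `x ∈ V(G_k) \ T_k` and
`y = inr v` for the clone `v_u` of `v ∈ T_k`. -/
def nextGraft (P : GraftData) : GraftData where
  V := P.V ⊕ ((Σ u : ↥P.T, {w : ↥P.T ⊕ ↥P.T // w ≠ Sum.inl u}) ⊕
        (↥P.T × ({v : P.V // v ∉ P.T} ⊕ ↥P.T)))
  G := SimpleGraph.fromRel (fun a b =>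
    -- edges of `G_k`
    (∃ x y : P.V, a = Sum.inl x ∧ b = Sum.inl y ∧ P.G.Adj x y) ∨
    -- each clone of `u` is adjacent to `N_{G_k}(u)`
    (∃ (x : P.V) (u : ↥P.T) (w : {w : ↥P.T ⊕ ↥P.T // w ≠ Sum.inl u}),
      a = Sum.inl x ∧ b = Sum.inr (Sum.inl ⟨u, w⟩) ∧ P.G.Adj ↑u x) ∨
    -- `u` (identified with the copy of `u` in `S_u`) is adjacent to the copies of `N_{G_k}(u)`
    (∃ (u : ↥P.T) (x : {v : P.V // v ∉ P.T}),
      a = Sum.inl ↑u ∧ b = Sum.inr (Sum.inr (u, Sum.inl x)) ∧ P.G.Adj ↑u ↑x) ∨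
    -- the clone of `u` identified with the copy of `v ∈ S_u` is adjacent to copies of `N(v)`
    (∃ (u : ↥P.T) (w : {w : ↥P.T ⊕ ↥P.T // w ≠ Sum.inl u}) (v : ↥P.T)
        (x : {v : P.V // v ∉ P.T}),
      a = Sum.inr (Sum.inl ⟨u, w⟩) ∧ b = Sum.inr (Sum.inr (u, Sum.inl x)) ∧
        (w : ↥P.T ⊕ ↥P.T) = Sum.inl v ∧ P.G.Adj ↑v ↑x) ∨
    -- the clone of `u` identified with the pendant `t_{u,v}` is adjacent to the clone `v_u`
    (∃ (u : ↥P.T) (w : {w : ↥P.T ⊕ ↥P.T // w ≠ Sum.inl u}) (v : ↥P.T),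
      a = Sum.inr (Sum.inl ⟨u, w⟩) ∧ b = Sum.inr (Sum.inr (u, Sum.inr v)) ∧
        (w : ↥P.T ⊕ ↥P.T) = Sum.inr v) ∨
    -- edges of `G_k` inside the copy `H'_u`
    (∃ (u : ↥P.T) (x y : {v : P.V // v ∉ P.T}),
      a = Sum.inr (Sum.inr (u, Sum.inl x)) ∧ b = Sum.inr (Sum.inr (u, Sum.inl y)) ∧
        P.G.Adj ↑x ↑y) ∨
    -- the clone `v_u` is adjacent to the copies of `N_{G_k}(v)`
    (∃ (u : ↥P.T) (x : {v : P.V // v ∉ P.T}) (v : ↥P.T),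
      a = Sum.inr (Sum.inr (u, Sum.inl x)) ∧ b = Sum.inr (Sum.inr (u, Sum.inr v)) ∧
        P.G.Adj ↑v ↑x))
  T := { a | (∃ u ∈ P.T, a = Sum.inl u) ∨
      (∃ c : (Σ u : ↥P.T, {w : ↥P.T ⊕ ↥P.T // w ≠ Sum.inl u}), a = Sum.inr (Sum.inl c)) }

/-- `BurlingGraft k` is the graft `(G_{k+1}, T_{k+1})`; in particular
`BurlingGraft 0 = (K₂, {t})`. -/
def BurlingGraft : ℕ → GraftData
  | 0 => ⟨Bool, ⊤, {true}⟩
  | (k + 1) => nextGraft (BurlingGraft k)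

/-- The graph `G*` obtained from a graph–stable-set pair by adding, for each `S ∈ 𝒮`,
a new vertex `v_S` whose neighbourhood is exactly `S`. -/
def GStar (P : GSPair) : SimpleGraph (P.V ⊕ ↥P.S) :=
  SimpleGraph.fromRel (fun a b =>
    (∃ u v : P.V, a = Sum.inl u ∧ b = Sum.inl v ∧ P.G.Adj u v) ∨
    (∃ (S : ↥P.S) (u : P.V), a = Sum.inr S ∧ b = Sum.inl u ∧ u ∈ (S : Set P.V)))

/-- The grafts obtainable from the graft `(K₂, {t})` by a finite sequence of pendent,
clone and join operations. -/
inductive Obtainable : GraftData → Prop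
  | base : Obtainable ⟨Bool, ⊤, {true}⟩
  | pendent (P : GraftData) (hP : Obtainable P) (t : P.V) (ht : t ∈ P.T) :
      Obtainable ⟨Option P.V, pendentGraph P.G t, pendentT P.T t⟩
  | clone (P : GraftData) (hP : Obtainable P) (t : P.V) (ht : t ∈ P.T) :
      Obtainable ⟨Option P.V, cloneGraph P.G t, cloneT P.T⟩
  | join (P Q : GraftData) (hP : Obtainable P) (hQ : Obtainable Q)
      (X : Set P.V) (hX : X ⊆ P.T)
      (hnb : ∀ x ∈ X, ∀ y ∈ X, P.G.neighborSet x = P.G.neighborSet y)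
      (φ : X ≃ ↥Q.T) :
      Obtainable ⟨P.V ⊕ {v : Q.V // v ∉ Q.T}, joinGraph P.G Q.G X Q.T φ, Sum.inl '' P.T⟩

def SeqP {W : Type u} (G : SimpleGraph W) (p : ℕ → W) (n : ℕ) : Prop :=
  ∀ i < n, ∀ j < n, (p i = p j → i = j) ∧ (G.Adj (p i) (p j) ↔ i + 1 = j ∨ j + 1 = i)

def SeqC {W : Type u} (G : SimpleGraph W) (p : ℕ → W) (n : ℕ) : Prop :=
  ∀ i < n, ∀ j < n, (p i = p j → i = j) ∧
    (G.Adj (p i) (p j) ↔ i + 1 = j ∨ j + 1 = i ∨ (i = 0 ∧ j + 1 = n) ∨ (j = 0 ∧ i + 1 = n))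

def Three {W : Type u} (Q : W → Prop) : Prop :=
  ∃ a b c, a ≠ b ∧ a ≠ c ∧ b ≠ c ∧ Q a ∧ Q b ∧ Q c

def NoM {W : Type u} (G : SimpleGraph W) (T S : Set W) : Prop :=
  ∀ (n : ℕ) (p : ℕ → W), SeqP G p n → (∀ i < n, p i ∈ S) →
    Three (fun u => (∃ i < n, p i = u) ∧ u ∈ T) → False

def NoF {W : Type u} (G : SimpleGraph W) (T S : Set W) : Prop :=
  ∀ (n : ℕ) (p : ℕ → W) (f : W), SeqP G p (n + 1) → (∀ i < n + 1, p i ∈ S) → f ∈ S →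
    (∀ i < n + 1, p i ≠ f) → p 0 ∈ T → p n ∈ T →
    Three (fun u => (∃ i < n + 1, p i = u) ∧ G.Adj f u) → False

def NoW {W : Type u} (G : SimpleGraph W) (S : Set W) : Prop :=
  ∀ (n : ℕ) (p : ℕ → W) (f : W), 4 ≤ n → SeqC G p n → (∀ i < n, p i ∈ S) → f ∈ S →
    (∀ i < n, p i ≠ f) →
    Three (fun u => (∃ i < n, p i = u) ∧ G.Adj f u) → False

structure Setup {W : Type u} (G : SimpleGraph W) (T A X B : Set W) : Prop where
  cov : ∀ w, w ∈ A ∨ w ∈ X ∨ w ∈ B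
  AX : ∀ w, w ∈ A → w ∉ X
  AB : ∀ w, w ∈ A → w ∉ B
  XB : ∀ w, w ∈ X → w ∉ B
  XT : ∀ w, w ∈ X → w ∈ T
  TB : ∀ w, w ∈ T → w ∉ B
  stab : ∀ u ∈ T, ∀ v ∈ T, ¬ G.Adj u v
  tri : ∀ u v w, G.Adj u v → G.Adj v w → G.Adj u w → False
  nAB : ∀ a ∈ A, ∀ b ∈ B, ¬ G.Adj a b
  tw : ∀ x ∈ X, ∀ y ∈ X, ∀ a ∈ A, G.Adj x a → G.Adj y a

theorem SeqP.rev {W : Type u} {G : SimpleGraph W} {p : ℕ → W} {n : ℕ} (h : SeqP G p n) :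
    SeqP G (fun i => p (n - 1 - i)) n := by
  intro i hi j hj
  have := h (n - 1 - i) (by omega) (n - 1 - j) (by omega)
  refine ⟨fun e => ?_, ?_⟩
  · have := this.1 e; omega
  · simp only [this.2]; omega

theorem SeqP.pre {W : Type u} {G : SimpleGraph W} {p : ℕ → W} {n m : ℕ} (h : SeqP G p n)
    (hm : m ≤ n) : SeqP G p m := fun i hi j hj => h i (by omega) j (by omega)

theorem SeqC.rot {W : Type u} {G : SimpleGraph W} {p : ℕ → W} {n : ℕ} (h : SeqC G p n)
    (k : ℕ) (hk : k < n) : SeqC G (fun i => p ((i + k) % n)) n := by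
  have key : ∀ i < n, ((i + k) % n = i + k ∧ i + k < n) ∨ ((i + k) % n = i + k - n ∧ n ≤ i + k) := by
    intro i hi
    by_cases h : i + k < n
    · left; exact ⟨Nat.mod_eq_of_lt h, h⟩
    · right
      refine ⟨?_, by omega⟩
      rw [Nat.mod_eq_sub_mod (by omega), Nat.mod_eq_of_lt (by omega)]
  intro i hi j hj
  have := h ((i + k) % n) (Nat.mod_lt _ (by omega)) ((j + k) % n) (Nat.mod_lt _ (by omega))
  have hi' := key i hi
  have hj' := key j hj
  refine ⟨fun e => ?_, ?_⟩
  · have := this.1 e; omega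
  · simp only [this.2]; omega

theorem rot_range {W : Type u} {p : ℕ → W} {n : ℕ} (k : ℕ) (hk : k < n) (u : W) :
    (∃ i < n, p ((i + k) % n) = u) ↔ ∃ i < n, p i = u := by
  constructor
  · rintro ⟨i, hi, e⟩
    exact ⟨_, Nat.mod_lt _ (by omega), e⟩
  · rintro ⟨i, hi, e⟩
    by_cases h : k ≤ i
    · refine ⟨i - k, by omega, ?_⟩
      rw [Nat.sub_add_cancel h, Nat.mod_eq_of_lt hi]; exact e
    · refine ⟨i + n - k, by omega, ?_⟩
      rw [Nat.sub_add_cancel (by omega), Nat.add_mod_right, Nat.mod_eq_of_lt hi]; exact e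

theorem SeqC.tail {W : Type u} {G : SimpleGraph W} {p : ℕ → W} {n : ℕ} (h : SeqC G p n) :
    SeqP G (fun i => p (i + 1)) (n - 1) := by
  intro i hi j hj
  have := h (i + 1) (by omega) (j + 1) (by omega)
  refine ⟨fun e => ?_, ?_⟩
  · have := this.1 e; omega
  · simp only [this.2]; omega

theorem cross {W : Type u} {G : SimpleGraph W} {T A X B : Set W} (S : Setup G T A X B)
    (p : ℕ → W) (d : ℕ) : ∀ (i j : ℕ), j = i + d + 1 →
    (∀ k, i ≤ k → k < j → G.Adj (p k) (p (k + 1))) →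
    p i ∈ A → p j ∈ B → ∃ k, i ≤ k ∧ k + 1 < j ∧ p k ∈ A ∧ p (k + 1) ∈ X := by
  induction d with
  | zero =>
    intro i j hij ha hi hj
    subst hij
    exact absurd (ha i le_rfl (by omega)) (S.nAB _ hi _ hj)
  | succ d ih =>
    intro i j hij ha hi hj
    rcases S.cov (p (i + 1)) with h | h | h
    · obtain ⟨k, h⟩ := ih (i + 1) j (by omega) (fun k hk hk' => ha k (by omega) hk') h hj
      exact ⟨k, by omega, h.2⟩
    · exact ⟨i, le_rfl, by omega, hi, h⟩
    · exact absurd (ha i le_rfl (by omega)) (S.nAB _ hi _ h)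

theorem SeqP.cross {W : Type u} {G : SimpleGraph W} {T A X B : Set W} (S : Setup G T A X B)
    {p : ℕ → W} {n : ℕ} (hp : SeqP G p n) (i j : ℕ) (hij : i < j) (hj : j < n)
    (hi : p i ∈ A) (hj : p j ∈ B) : ∃ k, i ≤ k ∧ k + 1 < j ∧ p k ∈ A ∧ p (k + 1) ∈ X :=
  _root_.cross S p (j - i - 1) i j (by omega)
    (fun k _ _ => ((hp k (by omega) (k + 1) (by omega)).2).2 (Or.inl rfl)) hi hj

theorem SeqP.btw {W : Type u} {G : SimpleGraph W} {T A X B : Set W} (S : Setup G T A X B)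
    {p : ℕ → W} {n : ℕ} (hp : SeqP G p n) (i j : ℕ) (hi' : i < n) (hj' : j < n)
    (hi : p i ∈ A) (hj : p j ∈ B) : ∃ k, ((i < k ∧ k < j) ∨ (j < k ∧ k < i)) ∧ p k ∈ X := by
  rcases lt_trichotomy i j with h | h | h
  · obtain ⟨k, h⟩ := hp.cross S i j h hj' hi hj
    exact ⟨k + 1, by omega, h.2.2.2⟩
  · subst h; exact absurd hj (S.AB _ hi)
  · obtain ⟨k, h⟩ := hp.rev.cross S (n - 1 - i) (n - 1 - j) (by omega) (by omega)
      (by simpa [show n - 1 - (n - 1 - i) = i by omega] using hi)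
      (by simpa [show n - 1 - (n - 1 - j) = j by omega] using hj)
    exact ⟨n - 1 - (k + 1), by omega, h.2.2.2⟩

theorem SeqP.mixed {W : Type u} {G : SimpleGraph W} {T A X B : Set W} (S : Setup G T A X B)
    {p : ℕ → W} {n : ℕ} (hp : SeqP G p n) (i j : ℕ) (hij : i < j) (hj' : j < n)
    (hi : p i ∈ A) (hj : p j ∈ B) :
    ∃ k, k + 1 < j ∧ p k ∈ A ∧ p (k + 1) ∈ X ∧ (∀ l, k + 1 < l → l < n → p l ∈ B) ∧
      ((∀ l ≤ k, p l ∈ A) ∨ (1 ≤ k ∧ p (k - 1) ∈ X ∧ ∀ l, l + 1 < k → p l ∈ B)) := by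
  obtain ⟨k, hk1, hk2, hkA, hkX⟩ := hp.cross S i j hij hj' hi hj
  have hX : ∀ l < n, p l ∈ X → l = k + 1 ∨ l + 1 = k := by
    intro l hl hlX
    have h1 : G.Adj (p (k + 1)) (p k) := (hp (k + 1) (by omega) k (by omega)).2.2 (by omega)
    have h2 := S.tw _ hkX _ hlX _ hkA h1
    have := (hp l hl k (by omega)).2.1 h2
    omega
  have hB : ∀ l, k + 1 < l → l < n → p l ∈ B := by
    intro l h1 h2
    rcases S.cov (p l) with h | h | h
    · obtain ⟨m, h3, h4⟩ := hp.btw S l j h2 hj' h hj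
      have := hX m (by omega) h4
      omega
    · have := hX l h2 h
      omega
    · exact h
  refine ⟨k, hk2, hkA, hkX, hB, ?_⟩
  by_cases hk : 1 ≤ k ∧ p (k - 1) ∈ X
  · right
    refine ⟨hk.1, hk.2, ?_⟩
    intro l hl
    have h0 : p (k - 2) ∈ B := by
      rcases S.cov (p (k - 2)) with h | h | h
      · have h1 : G.Adj (p (k - 1)) (p (k - 2)) :=
          (hp (k - 1) (by omega) (k - 2) (by omega)).2.2 (by omega)
        have h2 := S.tw _ hk.2 _ hkX _ h h1
        have := (hp (k + 1) (by omega) (k - 2) (by omega)).2.1 h2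
        omega
      · have := hX (k - 2) (by omega) h
        omega
      · exact h
    rcases S.cov (p l) with h | h | h
    · obtain ⟨m, h3, h4⟩ := hp.btw S l (k - 2) (by omega) (by omega) h h0
      have := hX m (by omega) h4
      omega
    · have := hX l (by omega) h
      omega
    · exact h
  · left
    intro l hl
    have hX' : ∀ l < k + 1, p l ∉ X := by
      intro l hl h
      have := hX l (by omega) h
      have h3 : l = k - 1 := by omega
      subst h3
      exact hk ⟨by omega, h⟩
    rcases S.cov (p l) with h | h | h
    · exact h
    · exact absurd h (hX' l (by omega))
    · obtain ⟨m, h3, h4⟩ := hp.btw S k l (by omega) (by omega) hkA h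
      exact absurd h4 (hX' m (by omega))

theorem Three.mono {W : Type u} {P Q : W → Prop} (h : Three P) (hPQ : ∀ u, P u → Q u) :
    Three Q := by
  obtain ⟨a, b, c, h1, h2, h3, ha, hb, hc⟩ := h
  exact ⟨a, b, c, h1, h2, h3, hPQ _ ha, hPQ _ hb, hPQ _ hc⟩

theorem rev_range {W : Type u} {p : ℕ → W} {n : ℕ} (u : W) (h : ∃ i < n, p i = u) :
    ∃ i < n, p (n - 1 - i) = u := by
  obtain ⟨i, hi, e⟩ := h
  exact ⟨n - 1 - i, by omega, by rw [show n - 1 - (n - 1 - i) = i by omega]; exact e⟩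

theorem noM_aux {W : Type u} {G : SimpleGraph W} {T A X B : Set W} (S : Setup G T A X B)
    (m1 : NoM G T Bᶜ) {n : ℕ} {p : ℕ → W} (hp : SeqP G p n)
    (h3 : Three (fun u => (∃ i < n, p i = u) ∧ u ∈ T)) (i j : ℕ) (hij : i < j) (hj' : j < n)
    (hi : p i ∈ A) (hj : p j ∈ B) : False := by
  obtain ⟨k, hk, hA, hX, hB, h⟩ := hp.mixed S i j hij hj' hi hj
  rcases h with h | ⟨h1, h2, h4⟩
  · refine m1 (k + 2) p (hp.pre (by omega)) ?_ (h3.mono ?_)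
    · intro l hl
      rcases Nat.lt_or_ge l (k + 1) with h5 | h5
      · exact S.AB _ (h l (by omega))
      · rw [show l = k + 1 by omega]; exact S.XB _ hX
    · rintro u ⟨⟨l, hl, rfl⟩, hu⟩
      refine ⟨⟨l, ?_, rfl⟩, hu⟩
      by_contra h5
      exact S.TB _ hu (hB l (by omega) hl)
  · have key : ∀ u, ((∃ i < n, p i = u) ∧ u ∈ T) → u = p (k - 1) ∨ u = p (k + 1) := by
      rintro u ⟨⟨l, hl, rfl⟩, hu⟩
      rcases Nat.lt_or_ge (l + 1) k with h5 | h5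
      · exact absurd (h4 l h5) (S.TB _ hu)
      rcases Nat.lt_or_ge (k + 1) l with h6 | h6
      · exact absurd (hB l h6 hl) (S.TB _ hu)
      have : l = k - 1 ∨ l = k ∨ l = k + 1 := by omega
      rcases this with h | h | h
      · left; rw [h]
      · subst h
        exact absurd ((hp l hl (l + 1) (by omega)).2.2 (by omega)) (S.stab _ hu _ (S.XT _ hX))
      · right; rw [h]
    obtain ⟨a, b, c, h1, h2, h3, ha, hb, hc⟩ := h3
    have := key _ ha
    have := key _ hb
    have := key _ hc
    grind

theorem noM_main {W : Type u} {G : SimpleGraph W} {T A X B : Set W} (S : Setup G T A X B)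
    (m1 : NoM G T Bᶜ) (m2 : NoM G X Aᶜ) : NoM G T Set.univ := by
  intro n p hp _ h3
  by_cases hB : ∀ i < n, p i ∈ Bᶜ
  · exact m1 n p hp hB h3
  by_cases hA : ∀ i < n, p i ∈ Aᶜ
  · refine m2 n p hp hA (h3.mono ?_)
    rintro u ⟨⟨l, hl, rfl⟩, hu⟩
    refine ⟨⟨l, hl, rfl⟩, ?_⟩
    have := S.cov (p l)
    have := S.TB _ hu
    have := hA l hl
    simp only [Set.mem_compl_iff] at this
    tauto
  simp only [Set.mem_compl_iff, not_forall, not_not] at hA hB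
  obtain ⟨j, hj, hjB⟩ := hB
  obtain ⟨i, hi, hiA⟩ := hA
  rcases lt_trichotomy i j with h | h | h
  · exact noM_aux S m1 hp h3 i j h hj hiA hjB
  · subst h; exact S.AB _ hiA hjB
  · refine noM_aux S m1 hp.rev (h3.mono ?_) (n - 1 - i) (n - 1 - j) (by omega) (by omega)
      (by simpa [show n - 1 - (n - 1 - i) = i by omega] using hiA)
      (by simpa [show n - 1 - (n - 1 - j) = j by omega] using hjB)
    rintro u ⟨h1, hu⟩
    exact ⟨rev_range u h1, hu⟩

theorem noF_main {W : Type u} {G : SimpleGraph W} {T A X B : Set W} (S : Setup G T A X B)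
    (m1 : NoM G T Bᶜ) (m2 : NoM G X Aᶜ) (f1 : NoF G T Bᶜ) (f2 : NoF G X Aᶜ) :
    NoF G T Set.univ := by
  intro n p f hp _ _ hf h0 hn h3
  have hM := noM_main S m1 m2
  by_cases hB : ∀ i < n + 1, p i ∈ Bᶜ
  · by_cases hfB : f ∈ B
    · refine hM (n + 1) p hp (fun _ _ => trivial) (h3.mono ?_)
      rintro u ⟨⟨l, hl, rfl⟩, hu⟩
      refine ⟨⟨l, hl, rfl⟩, ?_⟩
      rcases S.cov (p l) with h | h | h
      · exact absurd hu.symm (S.nAB _ h _ hfB)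
      · exact S.XT _ h
      · exact absurd h (hB l hl)
    · exact f1 n p f hp hB hfB hf h0 hn h3
  by_cases hA : ∀ i < n + 1, p i ∈ Aᶜ
  · by_cases hfA : f ∈ A
    · refine hM (n + 1) p hp (fun _ _ => trivial) (h3.mono ?_)
      rintro u ⟨⟨l, hl, rfl⟩, hu⟩
      refine ⟨⟨l, hl, rfl⟩, ?_⟩
      rcases S.cov (p l) with h | h | h
      · exact absurd h (hA l hl)
      · exact S.XT _ h
      · exact absurd hu (S.nAB _ hfA _ h)
    · have key : ∀ l < n + 1, p l ∈ T → p l ∈ X := by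
        intro l hl hu
        have := S.cov (p l)
        have := S.TB _ hu
        have := hA l hl
        simp only [Set.mem_compl_iff] at this
        tauto
      exact f2 n p f hp hA hfA hf (key 0 (by omega) h0) (key n (by omega) hn) h3
  simp only [Set.mem_compl_iff, not_forall, not_not] at hA hB
  obtain ⟨j, hj, hjB⟩ := hB
  obtain ⟨i, hi, hiA⟩ := hA
  rcases lt_trichotomy i j with h | h | h
  · obtain ⟨k, hk, _, _, hB, _⟩ := hp.mixed S i j h hj hiA hjB
    exact S.TB _ hn (hB n (by omega) (by omega))
  · subst h; exact S.AB _ hiA hjB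
  · obtain ⟨k, hk, _, _, hB, _⟩ := hp.rev.mixed S (n + 1 - 1 - i) (n + 1 - 1 - j) (by omega)
      (by omega) (by simpa only [show n + 1 - 1 - (n + 1 - 1 - i) = i by omega] using hiA)
      (by simpa only [show n + 1 - 1 - (n + 1 - 1 - j) = j by omega] using hjB)
    have := hB n (by omega) (by omega)
    simp only [show n + 1 - 1 - n = 0 by omega] at this
    exact S.TB _ h0 this

theorem detour {W : Type u} {G : SimpleGraph W} {T A X B : Set W} (S : Setup G T A X B)
    (m2 : NoM G X Aᶜ) {m : ℕ} {p : ℕ → W} (hp : SeqP G p m) (hA : ∀ i < m, p i ∈ Aᶜ)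
    (h0 : p 0 ∈ X) (hl : p (m - 1) ∈ X) (w : W) (hw : w ∈ X) (hwp : ∀ i < m, p i ≠ w)
    (i j : ℕ) (hij : i < j) (hj : j < m) (hi' : G.Adj w (p i)) (hj' : G.Adj w (p j)) : False := by
  classical
  obtain ⟨b, hb, hbm⟩ : ∃ b, G.Adj w (p b) ∧ ∀ l < b, ¬ G.Adj w (p l) :=
    have hex : ∃ l, G.Adj w (p l) := ⟨i, hi'⟩
    ⟨Nat.find hex, Nat.find_spec hex, fun l hl => Nat.find_min hex hl⟩
  have hbi : b ≤ i := by
    by_contra h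
    exact hbm i (by omega) hi'
  obtain ⟨c, hc, hjc, hcm, hcM⟩ : ∃ c, G.Adj w (p c) ∧ j ≤ c ∧ c < m ∧
      ∀ l, c < l → l < m → ¬ G.Adj w (p l) := by
    have hle : j ≤ m - 1 := by omega
    have := Nat.findGreatest_spec (P := fun l => G.Adj w (p l)) hle hj'
    refine ⟨_, this, Nat.le_findGreatest hle hj', ?_, ?_⟩
    · have := Nat.findGreatest_le (P := fun l => G.Adj w (p l)) (m - 1)
      omega
    · intro l h1 h2
      exact Nat.findGreatest_is_greatest h1 (by omega)
  have hbc : b + 1 < c := by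
    by_contra h
    have : c = b + 1 := by omega
    subst this
    exact S.tri _ _ _ hb ((hp b (by omega) (b + 1) (by omega)).2.2 (by omega)) hc
  set q : ℕ → W := fun l => if l ≤ b then p l else if l = b + 1 then w else p (l - (b + 2) + c)
    with hq
  have q1 : ∀ l, l ≤ b → q l = p l := by intro l h; simp [hq, h]
  have q2 : q (b + 1) = w := by simp [hq]
  have q3 : ∀ l, b + 2 ≤ l → q l = p (l - (b + 2) + c) := by
    intro l h
    simp only [hq]
    rw [if_neg (by omega), if_neg (by omega)]
  have hwb : ∀ l ≤ b, (G.Adj w (p l) ↔ l = b) := by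
    intro l h
    constructor
    · intro h1; by_contra h2; exact hbm l (by omega) h1
    · rintro rfl; exact hb
  have hwc : ∀ l, c ≤ l → l < m → (G.Adj w (p l) ↔ l = c) := by
    intro l h h'
    constructor
    · intro h1; by_contra h2; exact hcM l (by omega) h' h1
    · rintro rfl; exact hc
  have hlen : 0 < m := by omega
  refine m2 (b + 2 + (m - c)) q ?_ ?_ ?_
  · intro i hi j hj
    rcases (by omega : i ≤ b ∨ i = b + 1 ∨ b + 2 ≤ i) with h1 | h1 | h1 <;>
    rcases (by omega : j ≤ b ∨ j = b + 1 ∨ b + 2 ≤ j) with h2 | h2 | h2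
    · rw [q1 i h1, q1 j h2]
      exact hp i (by omega) j (by omega)
    · subst h2
      rw [q1 i h1, q2, G.adj_comm, hwb i h1]
      exact ⟨fun h => absurd h (hwp i (by omega)), by omega⟩
    · rw [q1 i h1, q3 j h2]
      have := hp i (by omega) (j - (b + 2) + c) (by omega)
      refine ⟨fun h => ?_, ?_⟩
      · have := this.1 h; omega
      · rw [this.2]; omega
    · subst h1
      rw [q1 j h2, q2, hwb j h2]
      exact ⟨fun h => absurd h.symm (hwp j (by omega)), by omega⟩
    · subst h1; subst h2
      simp
    · subst h1
      rw [q3 j h2, q2, hwc _ (by omega) (by omega)]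
      exact ⟨fun h => absurd h.symm (hwp _ (by omega)), by omega⟩
    · rw [q3 i h1, q1 j h2]
      have := hp (i - (b + 2) + c) (by omega) j (by omega)
      refine ⟨fun h => ?_, ?_⟩
      · have := this.1 h; omega
      · rw [this.2]; omega
    · subst h2
      rw [q3 i h1, q2, G.adj_comm, hwc _ (by omega) (by omega)]
      exact ⟨fun h => absurd h (hwp _ (by omega)), by omega⟩
    · rw [q3 i h1, q3 j h2]
      have := hp (i - (b + 2) + c) (by omega) (j - (b + 2) + c) (by omega)
      refine ⟨fun h => ?_, ?_⟩
      · have := this.1 h; omega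
      · rw [this.2]; omega
  · intro i hi
    rcases (by omega : i ≤ b ∨ i = b + 1 ∨ b + 2 ≤ i) with h1 | h1 | h1
    · rw [q1 i h1]; exact hA _ (by omega)
    · rw [h1, q2]; exact fun h => S.AX _ h hw
    · rw [q3 i h1]; exact hA _ (by omega)
  · refine ⟨p 0, w, p (m - 1), hwp 0 (by omega), ?_, (hwp (m - 1) (by omega)).symm,
      ⟨⟨0, by omega, q1 0 (by omega)⟩, h0⟩, ⟨⟨b + 1, by omega, q2⟩, hw⟩,
      ⟨⟨b + 2 + (m - 1 - c), by omega, ?_⟩, hl⟩⟩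
    · intro h
      have := (hp 0 (by omega) (m - 1) (by omega)).1 h
      omega
    · rw [q3 _ (by omega)]; congr 1; omega

theorem noW_mixed {W : Type u} {G : SimpleGraph W} {T A X B : Set W} (S : Setup G T A X B)
    (m2 : NoM G X Aᶜ) (f2 : NoF G X Aᶜ) {n : ℕ} {c : ℕ → W} {w : W} (hn : 4 ≤ n)
    (hc : SeqC G c n) (hw : ∀ i < n, c i ≠ w)
    (h3 : Three (fun u => (∃ i < n, c i = u) ∧ G.Adj w u))
    (j : ℕ) (hj : j < n) (hA : c 0 ∈ A) (hX : ∃ x ∈ X, G.Adj x (c 0)) (hjB : c j ∈ B) :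
    False := by
  obtain ⟨m, rfl⟩ : ∃ m, n = m + 1 := ⟨n - 1, by omega⟩
  have hp : SeqP G (fun i => c (i + 1)) m := hc.tail
  set p : ℕ → W := fun i => c (i + 1) with hpdef
  obtain ⟨x, hx, hxa⟩ := hX
  have adj0 : ∀ i < m, (G.Adj (c 0) (p i) ↔ i = 0 ∨ i + 1 = m) := by
    intro i hi
    simp only [hpdef]
    rw [(hc 0 (by omega) (i + 1) (by omega)).2]; omega
  have hXi : ∀ i < m, p i ∈ X → i = 0 ∨ i + 1 = m := by
    intro i hi h
    exact (adj0 i hi).1 (S.tw _ hx _ h _ hA hxa).symm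
  have hj0 : j ≠ 0 := by rintro rfl; exact S.AB _ hA hjB
  obtain ⟨j, rfl⟩ : ∃ j', j = j' + 1 := ⟨j - 1, by omega⟩
  have hjm : j < m := by omega
  have hjB : p j ∈ B := hjB
  have hj1 : j ≠ 0 ∧ j + 1 ≠ m := by
    constructor <;> intro h
    · exact S.nAB _ hA _ hjB ((adj0 j hjm).2 (by omega))
    · exact S.nAB _ hA _ hjB ((adj0 j hjm).2 (by omega))
  have hnA : ∀ i < m, p i ∉ A := by
    intro i hi h
    obtain ⟨k, h1, h2⟩ := hp.btw S i j hi hjm h hjB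
    have := hXi k (by omega) h2
    omega
  have e0 : p 0 ∈ X := by
    have h1 := S.nAB _ hA (p 0)
    have h2 := (adj0 0 (by omega)).2 (by omega)
    have := S.cov (p 0)
    have := hnA 0 (by omega)
    tauto
  have e1 : p (m - 1) ∈ X := by
    have h1 := S.nAB _ hA (p (m - 1))
    have h2 := (adj0 (m - 1) (by omega)).2 (by omega)
    have := S.cov (p (m - 1))
    have := hnA (m - 1) (by omega)
    tauto
  have hwp : ∀ i < m, p i ≠ w := fun i hi => hw (i + 1) (by omega)
  have split : ∀ u, (∃ i < m + 1, c i = u) → u = c 0 ∨ ∃ i < m, p i = u := by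
    rintro u ⟨i, hi, rfl⟩
    rcases i with _ | i
    · left; rfl
    · right; exact ⟨i, by omega, rfl⟩
  rcases S.cov w with hwA | hwX | hwB
  · -- neighbours among c 0, p 0, p (m-1)
    have key : ∀ u, ((∃ i < m + 1, c i = u) ∧ G.Adj w u) → u = c 0 ∨ u = p 0 ∨ u = p (m - 1) := by
      rintro u ⟨h, hu⟩
      rcases split u h with h | ⟨i, hi, rfl⟩
      · left; exact h
      · right
        have h4 : p i ∈ X := by
          have := S.cov (p i)
          have := hnA i hi
          have := S.nAB _ hwA (p i)
          tauto
        rcases hXi i hi h4 with h | h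
        · left; rw [h]
        · right; rw [← h]; rfl
    have t1 : G.Adj w (c 0) → G.Adj w (p 0) → False := fun h h' =>
      S.tri _ _ _ h ((adj0 0 (by omega)).2 (by omega)) h'
    have t2 : G.Adj w (c 0) → G.Adj w (p (m - 1)) → False := fun h h' =>
      S.tri _ _ _ h ((adj0 (m - 1) (by omega)).2 (by omega)) h'
    obtain ⟨a, b, d, h1, h2, h3, ha, hb, hd⟩ := h3
    have := key _ ha
    have := key _ hb
    have := key _ hd
    grind
  · have hM := @detour W G T A X B S m2 m p hp hnA e0 e1 w hwX hwp
    have hM' : ∀ u v, u ≠ v → (∃ i < m, p i = u) → (∃ i < m, p i = v) → G.Adj w u → G.Adj w v →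
        False := by
      rintro u v huv ⟨i, hi, rfl⟩ ⟨j, hj, rfl⟩ h1 h2
      rcases lt_trichotomy i j with h | h | h
      · exact hM i j h hj h1 h2
      · exact huv (by rw [h])
      · exact hM j i h hi h2 h1
    obtain ⟨a, b, d, h1, h2, h3, ha, hb, hd⟩ := h3
    rcases split _ ha.1 with h4 | h4
    · rcases split _ hb.1 with h5 | h5
      · exact h1 (h4.trans h5.symm)
      · rcases split _ hd.1 with h6 | h6
        · exact h2 (h4.trans h6.symm)
        · exact hM' _ _ h3 h5 h6 hb.2 hd.2
    · rcases split _ hb.1 with h5 | h5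
      · rcases split _ hd.1 with h6 | h6
        · exact h3 (h5.trans h6.symm)
        · exact hM' _ _ h2 h4 h6 ha.2 hd.2
      · exact hM' _ _ h1 h4 h5 ha.2 hb.2
  · obtain ⟨m, rfl⟩ : ∃ m', m = m' + 1 := ⟨m - 1, by omega⟩
    refine f2 m p w hp hnA (fun h => S.AB _ h hwB) hwp e0 e1 (h3.mono ?_)
    rintro u ⟨h, hu⟩
    refine ⟨?_, hu⟩
    rcases split u h with h | h
    · rw [h] at hu; exact absurd hu.symm (S.nAB _ hA _ hwB)
    · exact h

theorem noW_main {W : Type u} {G : SimpleGraph W} {T A X B : Set W} (S : Setup G T A X B)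
    (m2 : NoM G X Aᶜ) (f2 : NoF G X Aᶜ)
    (w1 : NoW G Bᶜ) (w2 : NoW G Aᶜ) : NoW G Set.univ := by
  intro n c w hn hc _ _ hw h3
  have rot3 : ∀ k < n, Three (fun u => (∃ i < n, c ((i + k) % n) = u) ∧ G.Adj w u) := by
    intro k hk
    refine h3.mono ?_
    rintro u ⟨h, hu⟩
    exact ⟨(rot_range k hk u).2 h, hu⟩
  by_cases hB : ∀ i < n, c i ∈ Bᶜ
  · by_cases hwB : w ∈ B
    · have hXX : ∀ i < n, G.Adj w (c i) → c i ∈ X := by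
        intro i hi h
        have := S.cov (c i)
        have h1 := hB i hi
        simp only [Set.mem_compl_iff] at h1
        have := fun h' => S.nAB (c i) h' _ hwB h.symm
        tauto
      obtain ⟨a, b, d, h1, h2, h3, ⟨⟨i, hi, rfl⟩, ha⟩, hb, hd⟩ := h3
      have hr := hc.rot i hi
      have hb' := (rot_range i hi b).2 hb.1
      have hd' := (rot_range i hi d).2 hd.1
      have hbX : b ∈ X := by obtain ⟨l, hl, rfl⟩ := hb.1; exact hXX l hl hb.2
      have hdX : d ∈ X := by obtain ⟨l, hl, rfl⟩ := hd.1; exact hXX l hl hd.2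
      have haX := hXX i hi ha
      have hq0 : c ((0 + i) % n) = c i := by rw [zero_add, Nat.mod_eq_of_lt hi]
      have hqB : c ((1 + i) % n) ∉ B := hB _ (Nat.mod_lt _ (by omega))
      set q : ℕ → W := fun l => c ((l + i) % n) with hq
      have hq0 : q 0 = c i := hq0
      have hqB : q 1 ∉ B := hqB
      rw [← hq0] at haX h1 h2
      have ad : G.Adj (q 0) (q 1) := (hr 0 (by omega) 1 (by omega)).2.2 (by omega)
      have q1A : q 1 ∈ A := by
        have := S.cov (q 1)
        have := fun h => S.stab _ (S.XT _ haX) _ (S.XT _ h) ad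
        tauto
      have key : ∀ u, u ∈ X → (∃ l < n, q l = u) → u = q 0 ∨ u = q 2 := by
        rintro u hu ⟨l, hl, rfl⟩
        have := (hr l hl 1 (by omega)).2.1 (S.tw _ haX _ hu _ q1A ad)
        have : l = 0 ∨ l = 2 := by omega
        rcases this with rfl | rfl
        · left; rfl
        · right; rfl
      have := key b hbX hb'
      have := key d hdX hd'
      grind
    · exact w1 n c w hn hc hB hwB hw h3
  by_cases hA : ∀ i < n, c i ∈ Aᶜ
  · by_cases hwA : w ∈ A
    · have hXX : ∀ i < n, G.Adj w (c i) → c i ∈ X := by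
        intro i hi h
        have := S.cov (c i)
        have h1 := hA i hi
        simp only [Set.mem_compl_iff] at h1
        have := fun h' => S.nAB _ hwA (c i) h' h
        tauto
      obtain ⟨k, hk, hkX⟩ : ∃ k < n, c k ∉ X := by
        by_contra hcon
        push Not at hcon
        exact S.stab _ (S.XT _ (hcon 0 (by omega))) _ (S.XT _ (hcon 1 (by omega)))
          ((hc 0 (by omega) 1 (by omega)).2.2 (by omega))
      have hr := (hc.rot k hk).tail
      refine m2 _ _ hr (fun i hi => hA _ (Nat.mod_lt _ (by omega))) ((rot3 k hk).mono ?_)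
      rintro u ⟨⟨l, hl, rfl⟩, hu⟩
      have hux := hXX _ (Nat.mod_lt _ (by omega)) hu
      refine ⟨?_, hux⟩
      rcases l with _ | l
      · rw [zero_add, Nat.mod_eq_of_lt hk] at hux
        exact absurd hux hkX
      · exact ⟨l, by omega, rfl⟩
    · exact w2 n c w hn hc hA hwA hw h3
  simp only [Set.mem_compl_iff, not_forall, not_not] at hA hB
  obtain ⟨j, hj, hjB⟩ := hB
  obtain ⟨i, hi, hiA⟩ := hA
  -- find k
  have hr := hc.rot i hi
  obtain ⟨j', hj', hj'B⟩ := (rot_range i hi (c j)).2 ⟨j, hj, rfl⟩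
  have hq0 : c ((0 + i) % n) = c i := by rw [zero_add, Nat.mod_eq_of_lt hi]
  have hj0 : j' ≠ 0 := by
    rintro rfl
    rw [hq0] at hj'B
    rw [← hj'B] at hjB
    exact S.AB _ hiA hjB
  obtain ⟨k, hk1, hk2, hkA, hkX⟩ := cross S (fun l => c ((l + i) % n)) (j' - 1) 0 j' (by omega)
    (fun k _ _ => (hr k (by omega) (k + 1) (by omega)).2.2 (by omega))
    (by simpa only [hq0] using hiA) (by simpa only [hj'B] using hjB)
  have hadj := (hr (k + 1) (by omega) k (by omega)).2.2 (by omega)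
  have hkn : (k + i) % n < n := Nat.mod_lt _ (by omega)
  simp only at hkA hkX hadj
  set k' := (k + i) % n
  obtain ⟨j2, hj2, hj2B⟩ := (rot_range k' hkn (c j)).2 ⟨j, hj, rfl⟩
  refine noW_mixed S m2 f2 hn (hc.rot k' hkn) (fun i hi => hw _ (Nat.mod_lt _ (by omega)))
    (rot3 k' hkn) j2 hj2 ?_ ⟨_, hkX, ?_⟩ ?_
  · rw [zero_add, Nat.mod_eq_of_lt hkn]; exact hkA
  · rw [zero_add, Nat.mod_eq_of_lt hkn]; exact hadj
  · rw [hj2B]; exact hjB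

theorem three_of_ncard {Y : Type u} {s : Set Y} (h : 3 ≤ s.ncard) : Three (fun u => u ∈ s) := by
  have hf : s.Finite := Set.finite_of_ncard_pos (by omega)
  obtain ⟨a, b, c, ha, hb, hc, h1, h2, h3⟩ := (Set.two_lt_ncard_iff hf).1 h
  exact ⟨a, b, c, h1, h2, h3, ha, hb, hc⟩

theorem ncard_of_three {Y : Type u} {s : Set Y} (hf : s.Finite) (h : Three (fun u => u ∈ s)) :
    3 ≤ s.ncard := by
  obtain ⟨a, b, c, h1, h2, h3, ha, hb, hc⟩ := h
  exact (Set.two_lt_ncard_iff hf).2 ⟨a, b, c, ha, hb, hc, h1, h2, h3⟩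

theorem cyc_adj {n : ℕ} (i j : Fin n) : (SimpleGraph.cycleGraph n).Adj i j ↔
    2 ≤ n ∧ (i.1 + 1 = j.1 ∨ j.1 + 1 = i.1 ∨ (i.1 = 0 ∧ j.1 + 1 = n) ∨ (j.1 = 0 ∧ i.1 + 1 = n)) := by
  rw [SimpleGraph.cycleGraph_adj']
  have key : ∀ a b : Fin n, ((a - b).1 = a.1 - b.1 ∧ b.1 ≤ a.1) ∨ ((a - b).1 = n - b.1 + a.1 ∧ a.1 < b.1) := by
    intro a b
    rcases Nat.lt_or_ge a.1 b.1 with h | h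
    · right
      refine ⟨?_, h⟩
      rw [Fin.val_sub, Nat.mod_eq_of_lt (by omega)]
    · left
      refine ⟨?_, h⟩
      rw [Fin.val_sub, Nat.mod_eq_sub_mod (by omega), Nat.mod_eq_of_lt (by omega)]
      omega
  have h1 := key i j
  have h2 := key j i
  have := i.2
  have := j.2
  omega

noncomputable def isoOf {Y : Type u} {n : ℕ} {L : SimpleGraph (Fin n)} {K : SimpleGraph Y} (f : Fin n → Y)
    (hi : Function.Injective f) (hs : Function.Surjective f)
    (ha : ∀ i j, K.Adj (f i) (f j) ↔ L.Adj i j) : K ≃g L :=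
  SimpleGraph.Iso.symm ⟨Equiv.ofBijective f ⟨hi, hs⟩, fun {i j} => ha i j⟩

theorem isoOf_symm {Y : Type u} {n : ℕ} {L : SimpleGraph (Fin n)} {K : SimpleGraph Y}
    (f : Fin n → Y)
    (hi : Function.Injective f) (hs : Function.Surjective f)
    (ha : ∀ i j, K.Adj (f i) (f j) ↔ L.Adj i j) (i : Fin n) : (isoOf f hi hs ha).symm i = f i := rfl

theorem pull {V W : Type u} {e : V → W} {p : ℕ → W} {n : ℕ} (hn : 0 < n)
    (h : ∀ i < n, ∃ v, e v = p i) : ∃ q : ℕ → V, ∀ i < n, e (q i) = p i := by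
  obtain ⟨v0, _⟩ := h 0 hn
  have : ∀ i, ∃ v, i < n → e v = p i := by
    intro i
    by_cases hi : i < n
    · obtain ⟨v, hv⟩ := h i hi
      exact ⟨v, fun _ => hv⟩
    · exact ⟨v0, fun h => absurd h hi⟩
  choose q hq using this
  exact ⟨q, hq⟩

theorem toNoM {V W : Type u} {H : SimpleGraph V} {G : SimpleGraph W} (e : H ↪g G)
    {T' : Set V} {T S : Set W} (hS : ∀ w ∈ S, ∃ v, e v = w) (hT : ∀ v, e v ∈ T → v ∈ T')
    (h : ∀ s : Set V, ¬ IsMountablePath (H.induce s) (Subtype.val ⁻¹' T')) : NoM G T S := by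
  intro n p hp hpS h3
  have hn : 0 < n := by
    obtain ⟨a, b, c, _, _, _, ⟨⟨i, hi, _⟩, _⟩, _⟩ := h3
    omega
  obtain ⟨q, hq⟩ := pull hn (fun i hi => hS _ (hpS i hi))
  let s : Set V := {v | ∃ i < n, q i = v}
  have hsf : s.Finite := by
    refine ((Set.finite_lt_nat n).image q).subset ?_
    rintro v ⟨i, hi, rfl⟩
    exact ⟨i, hi, rfl⟩
  have : Finite s := hsf
  refine h s ⟨⟨n, ⟨isoOf (fun i => ⟨q i, i.1, i.2, rfl⟩) ?_ ?_ ?_⟩⟩, ncard_of_three (Set.toFinite _) ?_⟩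
  · intro i j hij
    have h1 : q i = q j := congrArg Subtype.val hij
    ext
    refine (hp i i.2 j j.2).1 ?_
    rw [← hq i i.2, ← hq j j.2, h1]
  · rintro ⟨v, i, hi, rfl⟩
    exact ⟨⟨i, hi⟩, rfl⟩
  · intro i j
    rw [SimpleGraph.pathGraph_adj, ← (hp i i.2 j j.2).2, ← hq i i.2, ← hq j j.2]
    simp
  · obtain ⟨a, b, c, h1, h2, h3, ⟨⟨i, hi, rfl⟩, ha⟩, ⟨⟨j, hj, rfl⟩, hb⟩, ⟨⟨k, hk, rfl⟩, hc⟩⟩ := h3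
    rw [← hq _ hi] at ha h1 h2
    rw [← hq _ hj] at hb h1 h3
    rw [← hq _ hk] at hc h2 h3
    exact ⟨⟨q i, i, hi, rfl⟩, ⟨q j, j, hj, rfl⟩, ⟨q k, k, hk, rfl⟩,
      fun h => h1 (congrArg e (congrArg Subtype.val h)),
      fun h => h2 (congrArg e (congrArg Subtype.val h)),
      fun h => h3 (congrArg e (congrArg Subtype.val h)), hT _ ha, hT _ hb, hT _ hc⟩

theorem hubbed {V W : Type u} {H : SimpleGraph V} {G : SimpleGraph W} (e : H ↪g G)
    {S : Set W} (hS : ∀ w ∈ S, ∃ v, e v = w) {n : ℕ} {p : ℕ → W} {f : W}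
    (L : SimpleGraph (Fin n)) (hpS : ∀ i < n, p i ∈ S) (hfS : f ∈ S)
    (hf : ∀ i < n, p i ≠ f) (hinj : ∀ i < n, ∀ j < n, p i = p j → i = j)
    (hadj : ∀ i j : Fin n, G.Adj (p i) (p j) ↔ L.Adj i j)
    (h3 : Three (fun u => (∃ i < n, p i = u) ∧ G.Adj f u)) :
    ∃ (s : Set V) (w : s) (E : (H.induce s).induce {u | u ≠ w} ≃g L),
      3 ≤ ((H.induce s).neighborSet w).ncard ∧
      ∀ i : Fin n, e (E.symm i : {u // u ≠ w}).1.1 = p i := by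
  have hn : 0 < n := by
    obtain ⟨a, b, c, _, _, _, ⟨⟨i, hi, _⟩, _⟩, _⟩ := h3
    omega
  obtain ⟨q, hq⟩ := pull hn (fun i hi => hS _ (hpS i hi))
  obtain ⟨g, rfl⟩ := hS _ hfS
  let s : Set V := {v | v = g ∨ ∃ i < n, q i = v}
  have hsf : s.Finite := by
    refine (((Set.finite_lt_nat n).image q).insert g).subset ?_
    rintro v (rfl | ⟨i, hi, rfl⟩)
    · left; rfl
    · right; exact ⟨i, hi, rfl⟩
  have : Finite s := hsf
  have hne : ∀ i < n, q i ≠ g := by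
    intro i hi h
    apply hf i hi
    rw [← hq i hi, h]
  refine ⟨s, ⟨g, Or.inl rfl⟩, isoOf (fun i => ⟨⟨q i, Or.inr ⟨i.1, i.2, rfl⟩⟩,
    fun h => hne i i.2 (congrArg Subtype.val h)⟩) ?_ ?_ ?_, ncard_of_three (Set.toFinite _) ?_, ?_⟩
  · intro i j hij
    have h1 : q i = q j := congrArg (fun x => x.1.1) hij
    ext
    refine hinj i i.2 j j.2 ?_
    rw [← hq i i.2, ← hq j j.2, h1]
  · rintro ⟨⟨v, hv⟩, hv'⟩
    rcases hv with rfl | ⟨i, hi, rfl⟩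
    · exact absurd rfl hv'
    · exact ⟨⟨i, hi⟩, rfl⟩
  · intro i j
    rw [← hadj, ← hq i i.2, ← hq j j.2]
    simp
  · obtain ⟨a, b, c, h1, h2, h3, ⟨⟨i, hi, rfl⟩, ha⟩, ⟨⟨j, hj, rfl⟩, hb⟩, ⟨⟨k, hk, rfl⟩, hc⟩⟩ := h3
    rw [← hq _ hi] at ha h1 h2
    rw [← hq _ hj] at hb h1 h3
    rw [← hq _ hk] at hc h2 h3
    exact ⟨⟨q i, Or.inr ⟨i, hi, rfl⟩⟩, ⟨q j, Or.inr ⟨j, hj, rfl⟩⟩, ⟨q k, Or.inr ⟨k, hk, rfl⟩⟩,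
      fun h => h1 (congrArg e (congrArg Subtype.val h)),
      fun h => h2 (congrArg e (congrArg Subtype.val h)),
      fun h => h3 (congrArg e (congrArg Subtype.val h)),
      e.map_adj_iff.1 ha, e.map_adj_iff.1 hb, e.map_adj_iff.1 hc⟩
  · intro i
    exact hq i i.2

theorem toNoF {V W : Type u} {H : SimpleGraph V} {G : SimpleGraph W} (e : H ↪g G)
    {T' : Set V} {T S : Set W} (hS : ∀ w ∈ S, ∃ v, e v = w) (hT : ∀ v, e v ∈ T → v ∈ T')
    (h : ∀ s : Set V, ¬ IsGuardedFan (H.induce s) (Subtype.val ⁻¹' T')) : NoF G T S := by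
  intro n p f hp hpS hfS hf h0 hn h3
  obtain ⟨s, w, E, h4, h5⟩ := hubbed e hS (SimpleGraph.pathGraph (n + 1)) hpS hfS hf
    (fun i hi j hj => (hp i hi j hj).1)
    (fun i j => by rw [SimpleGraph.pathGraph_adj, (hp i i.2 j j.2).2]) h3
  refine h s ⟨w, n, E, h4, hT _ ?_, hT _ ?_⟩
  · rw [h5]; exact h0
  · rw [h5]; exact hn

theorem toNoW {V W : Type u} {H : SimpleGraph V} {G : SimpleGraph W} (e : H ↪g G)
    {S : Set W} (hS : ∀ w ∈ S, ∃ v, e v = w)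
    (h : ∀ s : Set V, ¬ IsWheel (H.induce s)) : NoW G S := by
  intro n p f hn hp hpS hfS hf h3
  obtain ⟨s, w, E, h4, h5⟩ := hubbed e hS (SimpleGraph.cycleGraph n) hpS hfS hf
    (fun i hi j hj => (hp i hi j hj).1)
    (fun i j => by rw [cyc_adj, (hp i i.2 j j.2).2]; omega) h3
  exact h s ⟨w, n, hn, ⟨E⟩, h4⟩

theorem seqOf {Y W : Type u} {n : ℕ} {L : SimpleGraph (Fin n)} {K : SimpleGraph Y}
    {G : SimpleGraph W} (hn : 0 < n) (E : K ≃g L) (ι : K ↪g G) :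
    ∃ p : ℕ → W, (∀ i : Fin n, p i = ι (E.symm i)) ∧
      (∀ i < n, ∀ j < n, p i = p j → i = j) ∧
      (∀ i j : Fin n, G.Adj (p i) (p j) ↔ L.Adj i j) ∧ ∀ y, ∃ i < n, p i = ι y := by
  have hp : ∃ p : ℕ → W, ∀ i : Fin n, p i = ι (E.symm i) :=
    ⟨fun i => if h : i < n then ι (E.symm ⟨i, h⟩) else ι (E.symm ⟨0, hn⟩), fun i => by simp⟩
  obtain ⟨p, hp⟩ := hp
  refine ⟨p, hp, ?_, ?_, ?_⟩
  · intro i hi j hj h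
    have h1 := hp ⟨i, hi⟩
    have h2 := hp ⟨j, hj⟩
    simp only at h1 h2
    rw [h1, h2] at h
    exact congrArg Fin.val (E.symm.injective (ι.injective h))
  · intro i j
    rw [hp, hp, ι.map_adj_iff, E.symm.map_adj_iff]
  · intro y
    exact ⟨(E y).1, (E y).2, by rw [hp]; simp⟩

theorem ofNoM {W : Type u} {G : SimpleGraph W} {T : Set W} (h : NoM G T Set.univ) (s : Set W) :
    ¬ IsMountablePath (G.induce s) (Subtype.val ⁻¹' T) := by
  rintro ⟨⟨n, ⟨E⟩⟩, h3⟩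
  obtain ⟨a, b, c, h1, h2, h3, ha, hb, hc⟩ := three_of_ncard h3
  have hn : 0 < n := by have := (E a).2; omega
  obtain ⟨p, hp, hi, hadj, hr⟩ := seqOf hn E (SimpleGraph.Embedding.induce s)
  refine h n p ?_ (fun _ _ => trivial) ⟨a.1, b.1, c.1, fun h => h1 (Subtype.ext h),
    fun h => h2 (Subtype.ext h), fun h => h3 (Subtype.ext h), ⟨hr a, ha⟩, ⟨hr b, hb⟩, ⟨hr c, hc⟩⟩
  intro i hi' j hj'
  refine ⟨hi i hi' j hj', ?_⟩
  have := hadj ⟨i, hi'⟩ ⟨j, hj'⟩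
  rw [SimpleGraph.pathGraph_adj] at this
  exact this

theorem unhub {W : Type u} {G : SimpleGraph W} {s : Set W} {f : s} {n : ℕ} {p : ℕ → W}
    (hr : ∀ y : {u : s | u ≠ f}, ∃ i < n, p i = y.1.1)
    (h3 : 3 ≤ ((G.induce s).neighborSet f).ncard) :
    Three (fun u => (∃ i < n, p i = u) ∧ G.Adj f.1 u) := by
  obtain ⟨a, b, c, h1, h2, h3, ha, hb, hc⟩ := three_of_ncard h3
  have hne : ∀ a : s, a ∈ (G.induce s).neighborSet f → a ≠ f := by
    rintro a ha rfl
    exact (G.induce s).loopless.irrefl _ ha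
  exact ⟨a.1, b.1, c.1, fun h => h1 (Subtype.ext h),
    fun h => h2 (Subtype.ext h), fun h => h3 (Subtype.ext h), ⟨hr ⟨a, hne _ ha⟩, ha⟩,
    ⟨hr ⟨b, hne _ hb⟩, hb⟩, ⟨hr ⟨c, hne _ hc⟩, hc⟩⟩

theorem ofNoF {W : Type u} {G : SimpleGraph W} {T : Set W} (h : NoF G T Set.univ) (s : Set W) :
    ¬ IsGuardedFan (G.induce s) (Subtype.val ⁻¹' T) := by
  rintro ⟨f, n, E, h3, h0, hl⟩
  obtain ⟨p, hp, hi, hadj, hr⟩ := seqOf (Nat.succ_pos n) E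
    ((SimpleGraph.Embedding.induce s).comp (SimpleGraph.Embedding.induce {u | u ≠ f}))
  refine h n p f.1 ?_ (fun _ _ => trivial) trivial ?_ ?_ ?_ (unhub hr h3)
  · intro i hi' j hj'
    refine ⟨hi i hi' j hj', ?_⟩
    have := hadj ⟨i, hi'⟩ ⟨j, hj'⟩
    rw [SimpleGraph.pathGraph_adj] at this
    exact this
  · intro i hi' hc
    have h1 := hp ⟨i, hi'⟩
    simp only at h1
    rw [h1] at hc
    exact (E.symm ⟨i, hi'⟩).2 (Subtype.ext hc)
  · have h1 := hp 0
    simp only [Fin.val_zero] at h1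
    rw [h1]; exact h0
  · have h1 := hp (Fin.last n)
    simp only [Fin.val_last] at h1
    rw [h1]; exact hl

theorem ofNoW {W : Type u} {G : SimpleGraph W} (h : NoW G Set.univ) (s : Set W) :
    ¬ IsWheel (G.induce s) := by
  rintro ⟨f, n, hn, ⟨E⟩, h3⟩
  obtain ⟨p, hp, hi, hadj, hr⟩ := seqOf (by omega) E
    ((SimpleGraph.Embedding.induce s).comp (SimpleGraph.Embedding.induce {u | u ≠ f}))
  refine h n p f.1 hn ?_ (fun _ _ => trivial) trivial ?_ (unhub hr h3)
  · intro i hi' j hj'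
    refine ⟨hi i hi' j hj', ?_⟩
    have := hadj ⟨i, hi'⟩ ⟨j, hj'⟩
    rw [cyc_adj] at this
    simp only at this
    rw [this]; omega
  · intro i hi' hc
    have h1 := hp ⟨i, hi'⟩
    simp only at h1
    rw [h1] at hc
    exact (E.symm ⟨i, hi'⟩).2 (Subtype.ext hc)

theorem tri_of_cf {V : Type u} {G : SimpleGraph V} (h : G.CliqueFree 3) (u v w : V)
    (h1 : G.Adj u v) (h2 : G.Adj v w) (h3 : G.Adj u w) : False := by
  classical
  exact h {u, v, w} (SimpleGraph.is3Clique_triple_iff.2 ⟨h1, h3, h2⟩)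

/-- **Lemma.** If `(G₁, T₁)` and `(G₂, T₂)` are clean grafts and `X ⊆ T₁` is a set of
vertices with `|X| = |T₂|` (witnessed by the bijection `φ`) all of which have the same
neighbourhood in `G₁`, then `join((G₁,T₁), X, (G₂,T₂))` is clean. -/
theorem join_isCleanGraft {V₁ V₂ : Type u} (G₁ : SimpleGraph V₁) (T₁ : Set V₁)
    (G₂ : SimpleGraph V₂) (T₂ : Set V₂)
    (h₁ : IsCleanGraft G₁ T₁) (h₂ : IsCleanGraft G₂ T₂)
    (X : Set V₁) (hX : X ⊆ T₁)
    (hnb : ∀ x ∈ X, ∀ y ∈ X, G₁.neighborSet x = G₁.neighborSet y)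
    (φ : X ≃ T₂) :
    IsCleanGraft (joinGraph G₁ G₂ X T₂ φ) (joinT T₁ T₂) := by
  classical
  obtain ⟨c1, s1, w1, f1, m1⟩ := h₁
  obtain ⟨c2, s2, w2, f2, m2⟩ := h₂
  set G := joinGraph G₁ G₂ X T₂ φ with hG
  have a11 : ∀ u v, G.Adj (Sum.inl u) (Sum.inl v) ↔ G₁.Adj u v := by
    intro u v
    simp only [hG, joinGraph, SimpleGraph.fromRel_adj]
    constructor
    · rintro ⟨hne, h | h⟩
      all_goals
        rcases h with ⟨u', v', hu, hv, h⟩ | ⟨u', v', hu, hv, h⟩ | ⟨u', v', hu, hv, h⟩ | ⟨u', v', hu, hv, h⟩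
        · cases hu; cases hv; first | exact h | exact h.symm
        · cases hu
        · cases hv
        · exact absurd h (s2 _ (φ u').2 _ (φ v').2)
    · intro h
      exact ⟨fun h' => h.ne (Sum.inl.inj h'), Or.inl (Or.inl ⟨u, v, rfl, rfl, h⟩)⟩
  have a22 : ∀ u v, G.Adj (Sum.inr u) (Sum.inr v) ↔ G₂.Adj u.1 v.1 := by
    intro u v
    simp only [hG, joinGraph, SimpleGraph.fromRel_adj]
    constructor
    · rintro ⟨hne, h | h⟩
      all_goals
        rcases h with ⟨u', v', hu, hv, h⟩ | ⟨u', v', hu, hv, h⟩ | ⟨u', v', hu, hv, h⟩ | ⟨u', v', hu, hv, h⟩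
        · cases hu
        · cases hu; cases hv; first | exact h | exact h.symm
        · cases hu
        · cases hu
    · intro h
      exact ⟨fun h' => h.ne (congrArg Subtype.val (Sum.inr.inj h')),
        Or.inl (Or.inr (Or.inl ⟨u, v, rfl, rfl, h⟩))⟩
  have a12 : ∀ u v, G.Adj (Sum.inl u) (Sum.inr v) ↔ ∃ h : u ∈ X, G₂.Adj (φ ⟨u, h⟩).1 v.1 := by
    intro u v
    simp only [hG, joinGraph, SimpleGraph.fromRel_adj]
    constructor
    · rintro ⟨hne, h | h⟩
      all_goals
        rcases h with ⟨u', v', hu, hv, h⟩ | ⟨u', v', hu, hv, h⟩ | ⟨u', v', hu, hv, h⟩ | ⟨u', v', hu, hv, h⟩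
        · first | (cases hu; done) | (cases hv; done)
        · first | (cases hu; done) | (cases hv; done)
        · cases hu; try cases hv
          try exact ⟨u'.2, h⟩
        · first | (cases hu; done) | (cases hv; done)
    · rintro ⟨hu, h⟩
      exact ⟨by simp, Or.inl (Or.inr (Or.inr (Or.inl ⟨⟨u, hu⟩, v, rfl, rfl, h⟩)))⟩
  have a21 : ∀ u v, G.Adj (Sum.inr v) (Sum.inl u) ↔ ∃ h : u ∈ X, G₂.Adj (φ ⟨u, h⟩).1 v.1 := by
    intro u v
    rw [G.adj_comm, a12]
  let A : Set (V₁ ⊕ {v : V₂ // v ∉ T₂}) := Sum.inl '' Xᶜ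
  let X' : Set (V₁ ⊕ {v : V₂ // v ∉ T₂}) := Sum.inl '' X
  let B : Set (V₁ ⊕ {v : V₂ // v ∉ T₂}) := Set.range Sum.inr
  let e1 : G₁ ↪g G := ⟨⟨Sum.inl, Sum.inl_injective⟩, fun {u v} => a11 u v⟩
  let g : V₂ → V₁ ⊕ {v : V₂ // v ∉ T₂} := fun v =>
    if h : v ∈ T₂ then Sum.inl (φ.symm ⟨v, h⟩).1 else Sum.inr ⟨v, h⟩
  have g1 : ∀ v (h : v ∈ T₂), g v = Sum.inl (φ.symm ⟨v, h⟩).1 := fun v h => by simp [g, h]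
  have g2 : ∀ v (h : v ∉ T₂), g v = Sum.inr ⟨v, h⟩ := fun v h => by simp [g, h]
  have hxe : ∀ v (h : v ∈ T₂) (h' : (φ.symm ⟨v, h⟩).1 ∈ X), (φ ⟨(φ.symm ⟨v, h⟩).1, h'⟩).1 = v := by
    intro v h h'
    simp
  have ginj : Function.Injective g := by
    intro u v h
    by_cases hu : u ∈ T₂ <;> by_cases hv : v ∈ T₂
    · rw [g1 u hu, g1 v hv] at h
      have := φ.symm.injective (Subtype.ext (Sum.inl.inj h))
      exact congrArg Subtype.val this
    · rw [g1 u hu, g2 v hv] at h; cases h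
    · rw [g2 u hu, g1 v hv] at h; cases h
    · rw [g2 u hu, g2 v hv] at h
      exact congrArg Subtype.val (Sum.inr.inj h)
  have gadj : ∀ u v, G.Adj (g u) (g v) ↔ G₂.Adj u v := by
    intro u v
    by_cases hu : u ∈ T₂ <;> by_cases hv : v ∈ T₂
    · rw [g1 u hu, g1 v hv, a11]
      exact ⟨fun h => absurd h (s1 _ (hX (φ.symm _).2) _ (hX (φ.symm _).2)),
        fun h => absurd h (s2 _ hu _ hv)⟩
    · rw [g1 u hu, g2 v hv, a12]
      constructor
      · rintro ⟨h, h'⟩; rwa [hxe] at h'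
      · intro h; exact ⟨(φ.symm _).2, by rwa [hxe]⟩
    · rw [g2 u hu, g1 v hv, a21, G₂.adj_comm]
      constructor
      · rintro ⟨h, h'⟩; rwa [hxe] at h'
      · intro h; exact ⟨(φ.symm _).2, by rwa [hxe]⟩
    · rw [g2 u hu, g2 v hv, a22]
  let e2 : G₂ ↪g G := ⟨⟨g, ginj⟩, fun {u v} => gadj u v⟩
  have hS1 : ∀ w ∈ Bᶜ, ∃ v, e1 v = w := by
    rintro (v | v) hw
    · exact ⟨v, rfl⟩
    · exact absurd ⟨v, rfl⟩ hw
  have hS2 : ∀ w ∈ Aᶜ, ∃ v, e2 v = w := by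
    rintro (v | v) hw
    · have hv : v ∈ X := by
        by_contra h
        exact hw ⟨v, h, rfl⟩
      refine ⟨(φ ⟨v, hv⟩).1, ?_⟩
      change g _ = _
      rw [g1 _ (φ ⟨v, hv⟩).2]
      simp
    · refine ⟨v.1, ?_⟩
      change g _ = _
      rw [g2 _ v.2]
  have hT1 : ∀ v, e1 v ∈ joinT T₁ T₂ → v ∈ T₁ := by
    rintro v ⟨u, hu, h⟩
    cases h
    exact hu
  have hT2 : ∀ v, e2 v ∈ X' → v ∈ T₂ := by
    rintro v ⟨u, hu, h⟩
    by_contra hv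
    change _ = g v at h
    rw [g2 v hv] at h
    cases h
  have tri : ∀ u v w, G.Adj u v → G.Adj v w → G.Adj u w → False := by
    have noAB : ∀ a b, a ∉ X → ¬ G.Adj (Sum.inl a) (Sum.inr b) := by
      intro a b ha h
      rw [a12] at h
      exact ha h.1
    intro u v w h1 h2 h3
    by_cases hB : u ∈ Bᶜ ∧ v ∈ Bᶜ ∧ w ∈ Bᶜ
    · obtain ⟨u, rfl⟩ := hS1 u hB.1
      obtain ⟨v, rfl⟩ := hS1 v hB.2.1
      obtain ⟨w, rfl⟩ := hS1 w hB.2.2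
      rw [e1.map_adj_iff] at h1 h2 h3
      exact tri_of_cf c1 u v w h1 h2 h3
    by_cases hA : u ∈ Aᶜ ∧ v ∈ Aᶜ ∧ w ∈ Aᶜ
    · obtain ⟨u, rfl⟩ := hS2 u hA.1
      obtain ⟨v, rfl⟩ := hS2 v hA.2.1
      obtain ⟨w, rfl⟩ := hS2 w hA.2.2
      rw [e2.map_adj_iff] at h1 h2 h3
      exact tri_of_cf c2 u v w h1 h2 h3
    have nAB : ∀ a ∈ A, ∀ b ∈ B, ¬ G.Adj a b := by
      rintro _ ⟨a, ha, rfl⟩ _ ⟨b, rfl⟩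
      exact noAB a b ha
    have dAB : ∀ a ∈ A, a ∉ B := by
      rintro _ ⟨a, ha, rfl⟩ ⟨b, h⟩
      cases h
    simp only [Set.mem_compl_iff] at hA hB
    have := h1.symm
    have := h2.symm
    have := h3.symm
    grind
  have stab : ∀ u ∈ joinT T₁ T₂, ∀ v ∈ joinT T₁ T₂, ¬ G.Adj u v := by
    rintro _ ⟨u, hu, rfl⟩ _ ⟨v, hv, rfl⟩
    rw [a11]
    exact s1 _ hu _ hv
  have S : Setup G (joinT T₁ T₂) A X' B := by
    refine ⟨?_, ?_, ?_, ?_, ?_, ?_, stab, tri, ?_, ?_⟩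
    · rintro (v | v)
      · by_cases h : v ∈ X
        · right; left; exact ⟨v, h, rfl⟩
        · left; exact ⟨v, h, rfl⟩
      · right; right; exact ⟨v, rfl⟩
    · rintro _ ⟨v, hv, rfl⟩ ⟨u, hu, h⟩
      cases h; exact hv hu
    · rintro _ ⟨v, hv, rfl⟩ ⟨u, h⟩
      cases h
    · rintro _ ⟨v, hv, rfl⟩ ⟨u, h⟩
      cases h
    · rintro _ ⟨v, hv, rfl⟩
      exact ⟨v, hX hv, rfl⟩
    · rintro _ ⟨v, hv, rfl⟩ ⟨u, h⟩
      cases h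
    · rintro _ ⟨a, ha, rfl⟩ _ ⟨b, rfl⟩ h
      rw [a12] at h
      exact ha h.1
    · rintro _ ⟨x, hx, rfl⟩ _ ⟨y, hy, rfl⟩ _ ⟨a, ha, rfl⟩
      rw [a11, a11]
      intro h
      have : a ∈ G₁.neighborSet x := h
      rw [hnb x hx y hy] at this
      exact this
  have M1 := toNoM e1 hS1 hT1 m1
  have M2 := toNoM e2 hS2 hT2 m2
  have F1 := toNoF e1 hS1 hT1 f1
  have F2 := toNoF e2 hS2 hT2 f2
  have W1 := toNoW e1 hS1 w1
  have W2 := toNoW e2 hS2 w2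
  refine ⟨?_, stab, ofNoW (noW_main S M2 F2 W1 W2), ofNoF (noF_main S M1 M2 F1 F2),
    ofNoM (noM_main S M1 M2)⟩
  intro t ht
  obtain ⟨a, b, c, hab, hac, hbc, rfl⟩ := SimpleGraph.is3Clique_iff.1 ht
  exact tri a b c hab hbc hac
end

section
/- Let k be a positive integer. Let G* be the graph obtained from the k-th Burling graph G'_k by adding, for each stable set S ∈ S_k, a new vertex v_S whose neighbourhood is exactly S. Then the graft (G*, {v_S : S ∈ S_k}) is isomorphic to the graft (G_k, T_k). -/
universe u

abbrev NGV (P : GraftData) : Type :=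
  P.V ⊕ ((Σ u : ↥P.T, {w : ↥P.T ⊕ ↥P.T // w ≠ Sum.inl u}) ⊕
        (↥P.T × ({v : P.V // v ∉ P.T} ⊕ ↥P.T)))
abbrev NXV (P : GSPair) : Type := P.V ⊕ ((↥P.S × P.V) ⊕ (↥P.S × ↥P.S))

section NG
variable (Q : GraftData)

open Classical in
noncomputable def ngT (u : ↥Q.T) (w : ↥Q.T ⊕ ↥Q.T) : NGV Q :=
  if h : w = Sum.inl u then Sum.inl u.1 else Sum.inr (Sum.inl ⟨u, ⟨w, h⟩⟩)

def ngO (x : {v : Q.V // v ∉ Q.T}) : (nextGraft Q).V := Sum.inl x.1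
def ngC (u : ↥Q.T) (x : {v : Q.V // v ∉ Q.T}) : (nextGraft Q).V := Sum.inr (Sum.inr (u, Sum.inl x))
def ngK (u : ↥Q.T) (v : ↥Q.T) : (nextGraft Q).V := Sum.inr (Sum.inr (u, Sum.inr v))

variable {Q}

theorem ngT_cases (u : ↥Q.T) (w) : (w = Sum.inl u ∧ ngT Q u w = Sum.inl u.1) ∨
    ∃ h : w ≠ Sum.inl u, ngT Q u w = Sum.inr (Sum.inl ⟨u, ⟨w, h⟩⟩) := by
  unfold ngT; split_ifs with h
  · exact Or.inl ⟨h, rfl⟩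
  · exact Or.inr ⟨h, rfl⟩

theorem ng_OO (x y) : (nextGraft Q).G.Adj (ngO Q x) (ngO Q y) ↔ Q.G.Adj x.1 y.1 := by
  simp [nextGraft, ngO, SimpleGraph.fromRel_adj, Q.G.adj_comm y.1 x.1]
  intro h; exact h.ne

theorem ng_OC (x u y) : ¬ (nextGraft Q).G.Adj (ngO Q x) (ngC Q u y) := by
  have := x.2
  simp [nextGraft, ngO, ngC, SimpleGraph.fromRel_adj]
  grind

theorem ng_OK (x u y) : ¬ (nextGraft Q).G.Adj (ngO Q x) (ngK Q u y) := by
  simp [nextGraft, ngO, ngK, SimpleGraph.fromRel_adj]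

theorem ng_OT (x u w) : (nextGraft Q).G.Adj (ngO Q x) (ngT Q u w) ↔ Q.G.Adj u.1 x.1 := by
  have hx := x.2
  have hu := u.2
  rcases ngT_cases u w with ⟨h, e⟩ | ⟨h, e⟩ <;> rw [e]
  · simp [nextGraft, ngO, SimpleGraph.fromRel_adj, Q.G.adj_comm x.1 u.1]
    rintro - h; exact hx (h ▸ hu)
  · simp [nextGraft, ngO, SimpleGraph.fromRel_adj, -Subtype.exists, -Sum.exists]

theorem ng_CC (u x u' y) : (nextGraft Q).G.Adj (ngC Q u x) (ngC Q u' y) ↔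
    u = u' ∧ Q.G.Adj x.1 y.1 := by
  simp [nextGraft, ngC, SimpleGraph.fromRel_adj]
  have := Q.G.adj_comm x.1 y.1
  have := @SimpleGraph.Adj.ne _ Q.G x.1 y.1
  grind

theorem ng_CK (u x u' y) : (nextGraft Q).G.Adj (ngC Q u x) (ngK Q u' y) ↔
    u = u' ∧ Q.G.Adj y.1 x.1 := by
  simp [nextGraft, ngC, ngK, SimpleGraph.fromRel_adj]
  grind

theorem ng_KK (u x u' y) : ¬ (nextGraft Q).G.Adj (ngK Q u x) (ngK Q u' y) := by
  simp [nextGraft, ngK, SimpleGraph.fromRel_adj]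

theorem ng_TC (u w u' x) : (nextGraft Q).G.Adj (ngT Q u w) (ngC Q u' x) ↔
    u = u' ∧ ∃ v, w = Sum.inl v ∧ Q.G.Adj v.1 x.1 := by
  rcases ngT_cases u w with ⟨h, e⟩ | ⟨h, e⟩ <;> rw [e]
  · subst h
    simp [nextGraft, ngC, SimpleGraph.fromRel_adj, -Subtype.exists, -Sum.exists]
    grind
  · simp [nextGraft, ngC, SimpleGraph.fromRel_adj, -Subtype.exists, -Sum.exists]
    grind

theorem ng_TK (u w u' x) : (nextGraft Q).G.Adj (ngT Q u w) (ngK Q u' x) ↔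
    u = u' ∧ w = Sum.inr x := by
  rcases ngT_cases u w with ⟨h, e⟩ | ⟨h, e⟩ <;> rw [e]
  · subst h
    simp [nextGraft, ngK, SimpleGraph.fromRel_adj]
  · simp [nextGraft, ngK, SimpleGraph.fromRel_adj, -Subtype.exists, -Sum.exists]
    grind

theorem ng_TT (hs : ∀ u v : ↥Q.T, ¬ Q.G.Adj u.1 v.1) (u w u' w') :
    ¬ (nextGraft Q).G.Adj (ngT Q u w) (ngT Q u' w') := by
  have h1 := hs u u'
  have h2 := hs u' u
  rcases ngT_cases u w with ⟨h, e⟩ | ⟨h, e⟩ <;> rcases ngT_cases u' w' with ⟨h', e'⟩ | ⟨h', e'⟩ <;>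
    rw [e, e'] <;>
    simp [nextGraft, SimpleGraph.fromRel_adj, -Subtype.exists, -Sum.exists, h1, h2]

abbrev IdxA (V S : Type) := (V ⊕ ((S × V) ⊕ (S × S))) ⊕ (S × (S ⊕ S))

variable (Q) in
noncomputable def ngMap : IdxA {v : Q.V // v ∉ Q.T} ↥Q.T → (nextGraft Q).V
  | Sum.inl (Sum.inl x) => ngO Q x
  | Sum.inl (Sum.inr (Sum.inl (u, x))) => ngC Q u x
  | Sum.inl (Sum.inr (Sum.inr (u, v))) => ngK Q u v
  | Sum.inr (u, w) => ngT Q u w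

theorem ngT_inj {u w u' w'} (h : ngT Q u w = ngT Q u' w') : u = u' ∧ w = w' := by
  rcases ngT_cases u w with ⟨h1, e1⟩ | ⟨h1, e1⟩ <;>
  rcases ngT_cases u' w' with ⟨h2, e2⟩ | ⟨h2, e2⟩ <;> rw [e1, e2] at h
  · have := Subtype.ext (Sum.inl.inj h); subst this; exact ⟨rfl, h1.trans h2.symm⟩
  · cases h
  · cases h
  · cases h; exact ⟨rfl, rfl⟩

theorem ngT_mem (u w) : ngT Q u w ∈ (nextGraft Q).T := by
  rcases ngT_cases u w with ⟨h1, e1⟩ | ⟨h1, e1⟩ <;> rw [e1]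
  · exact Or.inl ⟨u.1, u.2, rfl⟩
  · exact Or.inr ⟨_, rfl⟩

theorem ngO_nmem (x) : ngO Q x ∉ (nextGraft Q).T := by
  rintro (⟨u, hu, h⟩ | ⟨u, h⟩)
  · have := Sum.inl.inj h; exact x.2 (this ▸ hu)
  · cases h

theorem ngC_nmem (u x) : ngC Q u x ∉ (nextGraft Q).T := by
  rintro (⟨u, hu, h⟩ | ⟨u, h⟩) <;> cases h

theorem ngK_nmem (u x) : ngK Q u x ∉ (nextGraft Q).T := by
  rintro (⟨u, hu, h⟩ | ⟨u, h⟩) <;> cases h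

theorem ngMap_mem (a) : ngMap Q a ∈ (nextGraft Q).T ↔ ∃ s, a = Sum.inr s := by
  rcases a with (x | ⟨u, x⟩ | ⟨u, v⟩) | ⟨u, w⟩ <;>
    first | exact iff_of_true (ngT_mem u w) ⟨_, rfl⟩ | simp [ngMap, ngO_nmem, ngC_nmem, ngK_nmem]

theorem ngMap_inj : Function.Injective (ngMap Q) := by
  intro a b h
  have hm : (∃ s, a = Sum.inr s) ↔ (∃ s, b = Sum.inr s) := by
    rw [← ngMap_mem, ← ngMap_mem, h]
  rcases a with (x | ⟨u, x⟩ | ⟨u, v⟩) | ⟨u, w⟩ <;>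
  rcases b with (x' | ⟨u', x'⟩ | ⟨u', v'⟩) | ⟨u', w'⟩ <;>
    first
    | (exfalso; simp at hm; done)
    | (obtain ⟨rfl, rfl⟩ := ngT_inj h; rfl)
    | (have := Subtype.ext (Sum.inl.inj h); subst this; rfl)
    | (cases h; done)
    | (cases h; rfl)

theorem ngMap_surj : Function.Surjective (ngMap Q) := by
  classical
  rintro (x | ⟨u, w, h⟩ | ⟨u, x | v⟩)
  · by_cases hx : x ∈ Q.T
    · exact ⟨Sum.inr (⟨x, hx⟩, Sum.inl ⟨x, hx⟩), dif_pos rfl⟩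
    · exact ⟨Sum.inl (Sum.inl ⟨x, hx⟩), rfl⟩
  · exact ⟨Sum.inr (u, w), dif_neg h⟩
  · exact ⟨Sum.inl (Sum.inr (Sum.inl (u, x))), rfl⟩
  · exact ⟨Sum.inl (Sum.inr (Sum.inr (u, v))), rfl⟩

end NG

section ST
variable (P : GSPair)

def stSet (S : ↥P.S) : ↥P.S ⊕ ↥P.S → Set (NXV P)
  | Sum.inl T => Sum.inl '' (S : Set P.V) ∪ (fun u => Sum.inr (Sum.inl (S, u))) '' (T : Set P.V)
  | Sum.inr T => insert (Sum.inr (Sum.inr (S, T))) (Sum.inl '' (S : Set P.V))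

variable {P}

theorem stSet_O (S w) (x : P.V) : (Sum.inl x : NXV P) ∈ stSet P S w ↔ x ∈ S.1 := by
  rcases w with T | T <;> simp [stSet]

theorem stSet_C (S w S') (x : P.V) : (Sum.inr (Sum.inl (S', x)) : NXV P) ∈ stSet P S w ↔
    S = S' ∧ ∃ T, w = Sum.inl T ∧ x ∈ T.1 := by
  rcases w with T | T <;> simp [stSet]
  grind

theorem stSet_K (S w S' T') : (Sum.inr (Sum.inr (S', T')) : NXV P) ∈ stSet P S w ↔
    S = S' ∧ w = Sum.inr T' := by
  rcases w with T | T <;> simp [stSet]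
  grind

variable (P) in
def stV (S : ↥P.S) (w : ↥P.S ⊕ ↥P.S) : ↥(NEXT P).S :=
  ⟨stSet P S w, by
    rcases w with T | T
    · exact ⟨S, T, Or.inl rfl⟩
    · exact ⟨S, T, Or.inr rfl⟩⟩

theorem stV_inj {S w S' w'} (h : stV P S w = stV P S' w') : S = S' ∧ w = w' := by
  have h' : stSet P S w = stSet P S' w' := congrArg Subtype.val h
  have hS : S = S' := by
    apply Subtype.ext; ext x
    rw [← stSet_O S w x, h', stSet_O]
  subst hS
  refine ⟨rfl, ?_⟩
  rcases w with T | T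
  · rcases w' with T' | T'
    · congr 1; apply Subtype.ext; ext x
      have := stSet_C S (Sum.inl T) S x
      rw [h', stSet_C] at this
      simpa using this.symm
    · have := stSet_K S (Sum.inl T) S T'
      rw [h', stSet_K] at this
      simp at this
  · have := stSet_K S (Sum.inr T) S T
    rw [h', stSet_K] at this
    simpa using (this.2 ⟨rfl, rfl⟩).2.symm

theorem stV_surj (A : ↥(NEXT P).S) : ∃ S w, A = stV P S w := by
  obtain ⟨A, S, T, rfl | rfl⟩ := A
  · exact ⟨S, Sum.inl T, rfl⟩
  · exact ⟨S, Sum.inr T, rfl⟩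

variable (P) in
def stMap : IdxA P.V ↥P.S → (NEXT P).V ⊕ ↥(NEXT P).S
  | Sum.inl x => Sum.inl x
  | Sum.inr (S, w) => Sum.inr (stV P S w)

theorem stMap_bij : Function.Bijective (stMap P) := by
  constructor
  · rintro (a | ⟨S, w⟩) (b | ⟨S', w'⟩) h
    · cases h; rfl
    · cases h
    · cases h
    · obtain ⟨rfl, rfl⟩ := stV_inj (Sum.inr.inj h); rfl
  · rintro (a | A)
    · exact ⟨Sum.inl a, rfl⟩
    · obtain ⟨S, w, rfl⟩ := stV_surj A
      exact ⟨Sum.inr (S, w), rfl⟩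

theorem gs_ll (x y) : (GStar P).Adj (Sum.inl x) (Sum.inl y) ↔ P.G.Adj x y := by
  simp [GStar, SimpleGraph.fromRel_adj, P.G.adj_comm y x]
  intro h; exact h.ne
theorem gs_rl (S x) : (GStar P).Adj (Sum.inr S) (Sum.inl x) ↔ x ∈ S.1 := by
  simp [GStar, SimpleGraph.fromRel_adj]
theorem gs_rr (S T) : ¬ (GStar P).Adj (Sum.inr S) (Sum.inr T) := by
  simp [GStar, SimpleGraph.fromRel_adj]

theorem nx_OO (x y : P.V) : (NEXT P).G.Adj (Sum.inl x) (Sum.inl y) ↔ P.G.Adj x y := by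
  simp [NEXT, SimpleGraph.fromRel_adj, P.G.adj_comm y x]
  intro h; exact h.ne
theorem nx_OC (x : P.V) (S y) : ¬ (NEXT P).G.Adj (Sum.inl x) (Sum.inr (Sum.inl (S, y))) := by
  simp [NEXT, SimpleGraph.fromRel_adj]
theorem nx_OK (x : P.V) (S y) : ¬ (NEXT P).G.Adj (Sum.inl x) (Sum.inr (Sum.inr (S, y))) := by
  simp [NEXT, SimpleGraph.fromRel_adj]
theorem nx_KK (x y S T) : ¬ (NEXT P).G.Adj (Sum.inr (Sum.inr (T, x))) (Sum.inr (Sum.inr (S, y))) := by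
  simp [NEXT, SimpleGraph.fromRel_adj]
theorem nx_CC (S x S' y) : (NEXT P).G.Adj (Sum.inr (Sum.inl (S, x))) (Sum.inr (Sum.inl (S', y))) ↔
    S = S' ∧ P.G.Adj x y := by
  simp [NEXT, SimpleGraph.fromRel_adj]
  have := P.G.adj_comm x y
  have := @SimpleGraph.Adj.ne _ P.G x y
  grind
theorem nx_CK (S x S' T) : (NEXT P).G.Adj (Sum.inr (Sum.inl (S, x))) (Sum.inr (Sum.inr (S', T))) ↔
    S = S' ∧ x ∈ T.1 := by
  simp [NEXT, SimpleGraph.fromRel_adj]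
  grind

abbrev STV (P : GSPair) := (NEXT P).V ⊕ ↥(NEXT P).S
variable (P) in
def stO (x : P.V) : STV P := Sum.inl (Sum.inl x)
variable (P) in
def stC (S : ↥P.S) (x : P.V) : STV P := Sum.inl (Sum.inr (Sum.inl (S, x)))
variable (P) in
def stK (S T : ↥P.S) : STV P := Sum.inl (Sum.inr (Sum.inr (S, T)))
variable (P) in
def stT (S : ↥P.S) (w : ↥P.S ⊕ ↥P.S) : STV P := Sum.inr (stV P S w)

theorem st_OO (x y) : (GStar (NEXT P)).Adj (stO P x) (stO P y) ↔ P.G.Adj x y :=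
  (gs_ll _ _).trans (nx_OO x y)
theorem st_OC (x S y) : ¬ (GStar (NEXT P)).Adj (stO P x) (stC P S y) :=
  fun h => nx_OC x S y ((gs_ll _ _).1 h)
theorem st_OK (x S y) : ¬ (GStar (NEXT P)).Adj (stO P x) (stK P S y) :=
  fun h => nx_OK x S y ((gs_ll _ _).1 h)
theorem st_KK (x S T y) : ¬ (GStar (NEXT P)).Adj (stK P T x) (stK P S y) :=
  fun h => nx_KK x y S T ((gs_ll _ _).1 h)
theorem st_CC (S x S' y) : (GStar (NEXT P)).Adj (stC P S x) (stC P S' y) ↔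
    S = S' ∧ P.G.Adj x y := (gs_ll _ _).trans (nx_CC S x S' y)
theorem st_CK (S x S' T) : (GStar (NEXT P)).Adj (stC P S x) (stK P S' T) ↔
    S = S' ∧ x ∈ T.1 := (gs_ll _ _).trans (nx_CK S x S' T)
theorem st_TO (S w x) : (GStar (NEXT P)).Adj (stT P S w) (stO P x) ↔ x ∈ S.1 :=
  (gs_rl _ _).trans (stSet_O S w x)
theorem st_TC (S w S' x) : (GStar (NEXT P)).Adj (stT P S w) (stC P S' x) ↔
    S = S' ∧ ∃ T, w = Sum.inl T ∧ x ∈ T.1 := (gs_rl _ _).trans (stSet_C S w S' x)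
theorem st_TK (S w S' T) : (GStar (NEXT P)).Adj (stT P S w) (stK P S' T) ↔
    S = S' ∧ w = Sum.inr T := (gs_rl _ _).trans (stSet_K S w S' T)
theorem st_TT (S w S' w') : ¬ (GStar (NEXT P)).Adj (stT P S w) (stT P S' w') := gs_rr _ _

end ST

section Step
variable {P : GSPair} {Q : GraftData}

def idxEquiv {V S V' S' : Type} (a : V ≃ V') (b : S ≃ S') : IdxA V S ≃ IdxA V' S' :=
  Equiv.sumCongr (Equiv.sumCongr a (Equiv.sumCongr (Equiv.prodCongr b a) (Equiv.prodCongr b b)))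
    (Equiv.prodCongr b (Equiv.sumCongr b b))

theorem step_adj (a : P.V ≃ {v : Q.V // v ∉ Q.T}) (b : ↥P.S ≃ ↥Q.T)
    (haa : ∀ x y, Q.G.Adj (a x).1 (a y).1 ↔ P.G.Adj x y)
    (hba : ∀ S x, Q.G.Adj (b S).1 (a x).1 ↔ x ∈ S.1)
    (hs : ∀ u v : ↥Q.T, ¬ Q.G.Adj u.1 v.1) (i j) :
    (nextGraft Q).G.Adj (ngMap Q (idxEquiv a b i)) (ngMap Q (idxEquiv a b j)) ↔
      (GStar (NEXT P)).Adj (stMap P i) (stMap P j) := by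
  have hbs : ∀ (w : ↥P.S ⊕ ↥P.S) (x : P.V), 
      (∃ v, Sum.map b b w = Sum.inl v ∧ Q.G.Adj v.1 (a x).1) ↔ ∃ T, w = Sum.inl T ∧ x ∈ T.1 := by
    rintro (w | w) x <;> simp [hba]
  have hbr : ∀ (w : ↥P.S ⊕ ↥P.S) (T : ↥P.S), Sum.map b b w = Sum.inr (b T) ↔ w = Sum.inr T := by
    rintro (w | w) x <;> simp
  have hbb : ∀ S S', b S = b S' ↔ S = S' := fun S S' => b.apply_eq_iff_eq
  have OO : ∀ x y, (nextGraft Q).G.Adj (ngO Q (a x)) (ngO Q (a y)) ↔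
      (GStar (NEXT P)).Adj (stO P x) (stO P y) := fun x y => by rw [ng_OO, st_OO, haa]
  have OC : ∀ x u y, (nextGraft Q).G.Adj (ngO Q (a x)) (ngC Q (b u) (a y)) ↔
      (GStar (NEXT P)).Adj (stO P x) (stC P u y) :=
    fun x u y => iff_of_false (ng_OC _ _ _) (st_OC _ _ _)
  have OK : ∀ x u v, (nextGraft Q).G.Adj (ngO Q (a x)) (ngK Q (b u) (b v)) ↔
      (GStar (NEXT P)).Adj (stO P x) (stK P u v) :=
    fun x u y => iff_of_false (ng_OK _ _ _) (st_OK _ _ _)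
  have OT : ∀ x u w, (nextGraft Q).G.Adj (ngO Q (a x)) (ngT Q (b u) (Sum.map b b w)) ↔
      (GStar (NEXT P)).Adj (stO P x) (stT P u w) := fun x u w => by
    rw [SimpleGraph.adj_comm (GStar (NEXT P)), st_TO, ← hba]; exact ng_OT _ _ _
  have CC : ∀ u x u' y, (nextGraft Q).G.Adj (ngC Q (b u) (a x)) (ngC Q (b u') (a y)) ↔
      (GStar (NEXT P)).Adj (stC P u x) (stC P u' y) :=
    fun u x u' y => by rw [ng_CC, st_CC, haa, hbb]
  have CK : ∀ u x u' v, (nextGraft Q).G.Adj (ngC Q (b u) (a x)) (ngK Q (b u') (b v)) ↔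
      (GStar (NEXT P)).Adj (stC P u x) (stK P u' v) :=
    fun u x u' y => by rw [ng_CK, st_CK, hba, hbb]
  have KK : ∀ u x u' v, (nextGraft Q).G.Adj (ngK Q (b u) (b x)) (ngK Q (b u') (b v)) ↔
      (GStar (NEXT P)).Adj (stK P u x) (stK P u' v) :=
    fun u x u' y => iff_of_false (ng_KK _ _ _ _) (st_KK _ _ _ _)
  have TC : ∀ u w u' x, (nextGraft Q).G.Adj (ngT Q (b u) (Sum.map b b w)) (ngC Q (b u') (a x)) ↔
      (GStar (NEXT P)).Adj (stT P u w) (stC P u' x) := fun u w u' x => by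
    rw [st_TC, ← hbs, ← hbb]; exact ng_TC _ _ _ _
  have TK : ∀ u w u' v, (nextGraft Q).G.Adj (ngT Q (b u) (Sum.map b b w)) (ngK Q (b u') (b v)) ↔
      (GStar (NEXT P)).Adj (stT P u w) (stK P u' v) := fun u w u' x => by
    rw [st_TK, ← hbr, ← hbb]; exact ng_TK _ _ _ _
  have TT : ∀ u w u' w', (nextGraft Q).G.Adj (ngT Q (b u) (Sum.map b b w))
      (ngT Q (b u') (Sum.map b b w')) ↔
      (GStar (NEXT P)).Adj (stT P u w) (stT P u' w') :=
    fun u w u' w' => iff_of_false (ng_TT hs _ _ _ _) (st_TT _ _ _ _)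
  have sw : ∀ {x y : (nextGraft Q).V} {z t : STV P},
      ((nextGraft Q).G.Adj x y ↔ (GStar (NEXT P)).Adj z t) →
      ((nextGraft Q).G.Adj y x ↔ (GStar (NEXT P)).Adj t z) := fun h =>
    (SimpleGraph.adj_comm _ _ _).trans (h.trans (SimpleGraph.adj_comm _ _ _))
  rcases i with (x | ⟨u, x⟩ | ⟨u, v⟩) | ⟨u, w⟩
  · rcases j with (x' | ⟨u', x'⟩ | ⟨u', v'⟩) | ⟨u', w'⟩
    · exact OO _ _
    · exact OC _ _ _
    · exact OK _ _ _
    · exact OT _ _ _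
  · rcases j with (x' | ⟨u', x'⟩ | ⟨u', v'⟩) | ⟨u', w'⟩
    · exact sw (OC _ _ _)
    · exact CC _ _ _ _
    · exact CK _ _ _ _
    · exact sw (TC _ _ _ _)
  · rcases j with (x' | ⟨u', x'⟩ | ⟨u', v'⟩) | ⟨u', w'⟩
    · exact sw (OK _ _ _)
    · exact sw (CK _ _ _ _)
    · exact KK _ _ _ _
    · exact sw (TK _ _ _ _)
  · rcases j with (x' | ⟨u', x'⟩ | ⟨u', v'⟩) | ⟨u', w'⟩
    · exact sw (OT _ _ _)
    · exact TC _ _ _ _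
    · exact TK _ _ _ _
    · exact TT _ _ _ _

theorem step (e : GStar P ≃g Q.G) (he : ∀ a, e a ∈ Q.T ↔ ∃ S : ↥P.S, a = Sum.inr S) :
    ∃ e : GStar (NEXT P) ≃g (nextGraft Q).G,
      ∀ a, e a ∈ (nextGraft Q).T ↔ ∃ S : ↥(NEXT P).S, a = Sum.inr S := by
  let a : P.V ≃ {v : Q.V // v ∉ Q.T} := Equiv.ofBijective
    (fun x => ⟨e (Sum.inl x), by rw [he]; simp⟩) (by
      constructor
      · intro x y h
        exact Sum.inl.inj (e.injective (congrArg Subtype.val h))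
      · rintro ⟨v, hv⟩
        obtain ⟨x | S, rfl⟩ := e.surjective v
        · exact ⟨x, rfl⟩
        · exact absurd ((he _).2 ⟨S, rfl⟩) hv)
  let b : ↥P.S ≃ ↥Q.T := Equiv.ofBijective
    (fun S => ⟨e (Sum.inr S), (he _).2 ⟨S, rfl⟩⟩) (by
      constructor
      · intro x y h
        exact Sum.inr.inj (e.injective (congrArg Subtype.val h))
      · rintro ⟨v, hv⟩
        obtain ⟨x, rfl⟩ := e.surjective v
        obtain ⟨S, rfl⟩ := (he _).1 hv
        exact ⟨S, rfl⟩)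
  have haa : ∀ x y, Q.G.Adj (a x).1 (a y).1 ↔ P.G.Adj x y := fun x y =>
    (e.map_adj_iff).trans (gs_ll x y)
  have hba : ∀ S x, Q.G.Adj (b S).1 (a x).1 ↔ x ∈ S.1 := fun S x =>
    (e.map_adj_iff).trans (gs_rl S x)
  have hs : ∀ u v : ↥Q.T, ¬ Q.G.Adj u.1 v.1 := by
    intro u v
    obtain ⟨S, rfl⟩ := b.surjective u
    obtain ⟨T, rfl⟩ := b.surjective v
    exact fun h => gs_rr S T (e.map_adj_iff.1 h)
  let f := Equiv.ofBijective (stMap P) stMap_bij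
  let g := Equiv.ofBijective (ngMap Q) ⟨ngMap_inj, ngMap_surj⟩
  let E := f.symm.trans ((idxEquiv a b).trans g)
  have hE : ∀ i, E (stMap P i) = ngMap Q (idxEquiv a b i) := by
    intro i
    have : f.symm (stMap P i) = i := f.symm_apply_apply i
    simp only [E, Equiv.trans_apply, this]; rfl
  refine ⟨⟨E, ?_⟩, ?_⟩
  · intro x y
    obtain ⟨i, rfl⟩ := stMap_bij.2 x
    obtain ⟨j, rfl⟩ := stMap_bij.2 y
    rw [hE, hE]
    exact step_adj a b haa hba hs i j
  · intro x
    obtain ⟨i, rfl⟩ := stMap_bij.2 x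
    change E _ ∈ _ ↔ _
    rw [hE, ngMap_mem]
    rcases i with i | ⟨S, w⟩
    · simp [idxEquiv, stMap]
    · simp [idxEquiv, stMap]
end Step

theorem base_case : ∃ e : GStar (BurlingPair 0) ≃g (BurlingGraft 0).G,
      ∀ a, e a ∈ (BurlingGraft 0).T ↔ ∃ S : ↥(BurlingPair 0).S, a = Sum.inr S := by
  let S0 : ↥(BurlingPair 0).S := ⟨Set.univ, rfl⟩
  have hS : ∀ S : ↥(BurlingPair 0).S, S = S0 := fun S => Subtype.ext S.2
  let f : (BurlingPair 0).V ⊕ ↥(BurlingPair 0).S → Bool := Sum.elim (fun _ => false) (fun _ => true)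
  have hf : Function.Bijective f := by
    constructor
    · rintro (x | S) (y | T) h
      · rfl
      · cases h
      · cases h
      · rw [hS S, hS T]
    · rintro (_ | _)
      · exact ⟨Sum.inl (), rfl⟩
      · exact ⟨Sum.inr S0, rfl⟩
  refine ⟨⟨Equiv.ofBijective f hf, ?_⟩, ?_⟩
  · intro x y
    change f x ≠ f y ↔ _
    rcases x with x | S <;> rcases y with y | T
    · rw [gs_ll]; exact iff_of_false (fun h => h rfl) (fun h => h)
    · rw [SimpleGraph.adj_comm, gs_rl, hS T]; simp [f, S0]
    · rw [gs_rl, hS S]; simp [f, S0]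
    · simp [gs_rr, f]
  · intro x
    change f x = true ↔ _
    rcases x with x | S <;> simp [f]

theorem all_cases (k : ℕ) : ∃ e : GStar (BurlingPair k) ≃g (BurlingGraft k).G,
      ∀ a, e a ∈ (BurlingGraft k).T ↔ ∃ S : ↥(BurlingPair k).S, a = Sum.inr S := by
  induction k with
  | zero => exact base_case
  | succ k ih =>
    obtain ⟨e, he⟩ := ih
    exact step e he

/-- **Proposition.** Let `k` be a positive integer and let `G*` be the graph obtained from
the `k`-th Burling graph `G'_k` by adding, for each `S ∈ 𝒮_k`, a vertex `v_S` with
neighbourhood exactly `S`.  Then the graft `(G*, {v_S : S ∈ 𝒮_k})` is isomorphic to the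
graft `(G_k, T_k)`. -/
theorem gstar_isomorphic_burlingGraft (k : ℕ) (hk : 0 < k) :
    ∃ e : GStar (BurlingPair (k - 1)) ≃g (BurlingGraft (k - 1)).G,
      ∀ a, e a ∈ (BurlingGraft (k - 1)).T ↔
        ∃ S : ↥(BurlingPair (k - 1)).S, a = Sum.inr S := by

  exact all_cases (k - 1)
end
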